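/- (Stanley's reciprocity identity) For every nonempty polytope P, Σ_{∅ ≤ F ≤ P} (−1)^{dim F} · g(F*,t) · g(P/F,t) = 0, an identity of polynomials in t, where the sum runs over all faces F of P including the empty face ∅ (of dimension −1) and P itself. -/

import Mathlib

open Classical Polynomial

section PolytopeDefs

variable {V : Type*} [AddCommGroup V] [Module ℝ V]

/-- A polytope: the convex hull of finitely many points. -/
def IsPolytope (P : Set V) : Prop := ∃ S : Finset V, P = convexHull ℝ (S : Set V)

/-- Faces of a polytope (or of a cone): the set itself, the empty face, and the
sets of maximizers of linear functionals (equivalently, intersections with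
supporting hyperplanes). -/
def IsFace (P F : Set V) : Prop :=
  F = P ∨ F = ∅ ∨ ∃ l : V →ₗ[ℝ] ℝ, F = {x | x ∈ P ∧ ∀ y ∈ P, l y ≤ l x}

/-- Dimension of a polytope: the dimension of its affine span, with the
convention `pdim ∅ = -1`. -/
noncomputable def pdim (P : Set V) : ℤ :=
  if P = ∅ then -1 else (Module.finrank ℝ (affineSpan ℝ P).direction : ℤ)

/-- The `g`-truncation: from the toric `h`-polynomial of a `d`-dimensional
polytope to its toric `g`-polynomial, via `g_k = h_k - h_{k-1}` for
`0 ≤ k ≤ d/2`, with `h_{-1} = 0`. -/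
noncomputable def truncG (d : ℤ) (h : Polynomial ℚ) : Polynomial ℚ :=
  ∑ k ∈ Finset.range (d.toNat / 2 + 1),
    Polynomial.C (h.coeff k - if k = 0 then 0 else h.coeff (k - 1)) * Polynomial.X ^ k

/-- Fuelled recursion computing the toric `h`-polynomial of the interval `[F,G]`
of a face lattice (with `F` playing the role of the empty face):
`h([F,G],t) = ∑_{F ≤ G' < G} g([F,G'],t) · (t-1)^{dim G - dim G' - 1}`. -/
noncomputable def relHAux : ℕ → Set V → Set V → Polynomial ℚ
  | 0, _, _ => 1
  | n + 1, F, G =>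
      if G = F then 1
      else ∑ᶠ G' ∈ {G' : Set V | IsFace G G' ∧ F ⊆ G' ∧ G' ≠ G},
        truncG (pdim G' - pdim F - 1) (relHAux n F G') *
          (Polynomial.X - 1) ^ (pdim G - pdim G' - 1).toNat

/-- The toric `h`-polynomial of the interval `[F,G]` in a face lattice. -/
noncomputable def relH (F G : Set V) : Polynomial ℚ := relHAux (pdim G + 1).toNat F G

/-- The toric `g`-polynomial of the interval `[F,G]` in a face lattice;
`relG F P` is the polynomial `g(P/F, t)`. -/
noncomputable def relG (F G : Set V) : Polynomial ℚ :=
  truncG (pdim G - pdim F - 1) (relH F G)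

/-- The toric `h`-polynomial `h(P,t)` of a polytope `P`. -/
noncomputable def toricH (P : Set V) : Polynomial ℚ := relH ∅ P

/-- The toric `g`-polynomial `g(P,t)` of a polytope `P`. -/
noncomputable def toricG (P : Set V) : Polynomial ℚ := relG ∅ P

end PolytopeDefs
section DualDefs

variable {V : Type*} [AddCommGroup V] [Module ℝ V]

/-- Fuelled recursion computing the toric `h`-polynomial of the *order-dual* of
the interval `[F,G]` in a face lattice. -/
noncomputable def dualHAux : ℕ → Set V → Set V → Polynomial ℚ
  | 0, _, _ => 1
  | n + 1, F, G =>
      if G = F then 1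
      else ∑ᶠ G' ∈ {G' : Set V | IsFace G G' ∧ F ⊆ G' ∧ G' ≠ F},
        truncG (pdim G - pdim G' - 1) (dualHAux n G' G) *
          (Polynomial.X - 1) ^ (pdim G' - pdim F - 1).toNat

/-- The toric `g`-polynomial of the order-dual of the interval `[F,G]`. -/
noncomputable def dualRelG (F G : Set V) : Polynomial ℚ :=
  truncG (pdim G - pdim F - 1) (dualHAux (pdim G - pdim F + 1).toNat F G)

/-- `g(F*,t)`: the toric `g`-polynomial computed by the usual recursion from the
order-dual of the face lattice of `F`; in particular `toricGDual ∅ = 1`. -/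
noncomputable def toricGDual (F : Set V) : Polynomial ℚ := dualRelG ∅ F

end DualDefs


section Alg

theorem truncG_coeff (d : ℤ) (h : Polynomial ℚ) (k : ℕ) :
    (truncG d h).coeff k = if k < d.toNat / 2 + 1 then ((1 - X) * h).coeff k else 0 := by
  unfold truncG
  rw [finsetSum_coeff]
  simp only [coeff_C_mul, coeff_X_pow]
  simp only [mul_ite, mul_one, mul_zero]
  rw [Finset.sum_ite_eq]
  simp only [Finset.mem_range]
  congr 1
  cases k with
  | zero => simp [sub_mul]
  | succ k => simp [sub_mul, coeff_X_mul]

theorem trunc_antisym (r : ℕ) (hr : 0 < r) (d : ℤ) (hd : d = (r : ℤ) - 1) (h : Polynomial ℚ)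
    (hQ : reflect r ((X - 1) * h) = - ((X - 1) * h)) (hdeg : ((X - 1) * h).natDegree ≤ r) :
    2 * (truncG d h).natDegree < r ∧ (X - 1) * h = reflect r (truncG d h) - truncG d h := by
  have hd' : d.toNat = r - 1 := by omega
  have hc := truncG_coeff d h
  rw [hd'] at hc
  set Q := (X - 1) * h with hQd
  have hQ1 : (1 - X) * h = - Q := by rw [hQd]; ring
  rw [hQ1] at hc
  set g := truncG d h
  constructor
  · have : g.natDegree ≤ (r - 1) / 2 := by
      rw [natDegree_le_iff_coeff_eq_zero]
      intro N hN
      rw [hc, if_neg (by omega)]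
    omega
  · ext k
    rw [coeff_sub, coeff_reflect]
    have hk : Q.coeff (revAt r k) = - Q.coeff k := by
      rw [← coeff_reflect, hQ, coeff_neg]
    by_cases hkr : k ≤ r
    · rw [revAt_le hkr] at *
      rw [hc, hc, coeff_neg, coeff_neg]
      rcases lt_trichotomy (2 * k) r with h1 | h1 | h1
      · rw [if_neg (by omega), if_pos (by omega)]; ring
      · have : r - k = k := by omega
        rw [this] at hk ⊢
        rw [if_neg (by omega)]; linarith
      · rw [if_pos (by omega), if_neg (by omega)]; linarith
    · have : revAt r k = k := by
        rw [revAt_eq_self_of_lt (by omega)]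
      rw [this]
      rw [coeff_eq_zero_of_natDegree_lt (by omega)]; ring

theorem reflect_sub' (N : ℕ) (f g : Polynomial ℚ) : reflect N (f - g) = reflect N f - reflect N g := by
  ext k; simp [coeff_reflect]

theorem reflect_sum' {ι : Type*} (N : ℕ) (s : Finset ι) (f : ι → Polynomial ℚ) :
    reflect N (∑ i ∈ s, f i) = ∑ i ∈ s, reflect N (f i) := by
  ext k; simp [coeff_reflect]

theorem natDegree_kappa (n : ℕ) : ((X - 1 : Polynomial ℚ) ^ n).natDegree ≤ n := by
  have h : (X - 1 : Polynomial ℚ).natDegree ≤ 1 := by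
    rw [← C_1]; exact (natDegree_X_sub_C _).le
  simpa using natDegree_pow_le_of_le n h

theorem reflect_kappa (n : ℕ) : reflect n ((X - 1 : Polynomial ℚ) ^ n) = (-1) ^ n * (X - 1) ^ n := by
  induction n with
  | zero => 
    simp
  | succ n ih =>
    rw [pow_succ, reflect_mul _ _ (F := n) (G := 1), ih]
    · have : reflect 1 (X - 1 : Polynomial ℚ) = 1 - X := by
        rw [reflect_sub']
        have h1 : reflect 1 (X : Polynomial ℚ) = 1 := by
          have := reflect_monomial 1 1 (R := ℚ)
          simpa using this
        have h2 : reflect 1 (1 : Polynomial ℚ) = X := by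
          have := reflect_monomial 1 0 (R := ℚ)
          simpa using this
        rw [h1, h2]
      rw [this]; ring
    · exact natDegree_kappa n
    · rw [← C_1]; exact (natDegree_X_sub_C _).le

theorem eq_zero_of_reflect (r : ℕ) (S : Polynomial ℚ) (h : reflect r S = S)
    (hdeg : 2 * S.natDegree < r) : S = 0 := by
  have hk : ∀ k, k ≤ r → S.coeff (r - k) = S.coeff k := by
    intro k hk
    conv_rhs => rw [← h, coeff_reflect, revAt_le hk]
  ext k
  rw [coeff_zero]
  by_cases h1 : S.natDegree < k
  · exact coeff_eq_zero_of_natDegree_lt h1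
  · rw [← hk k (by omega)]
    exact coeff_eq_zero_of_natDegree_lt (by omega)

variable {α : Type*} [PartialOrder α] [Fintype α]

/-- Eulerian condition. -/
def EulerC (ρ : α → ℤ) : Prop := ∀ s t : α, s < t →
  ∑ x : α with s ≤ x ∧ x ≤ t, (-1 : Polynomial ℚ) ^ (ρ t - ρ x).toNat = 0

theorem kappa_inv (ρ : α → ℤ) (hρ : StrictMono ρ) (hE : EulerC ρ) (s t : α) (hst : s < t) :
    ∑ x : α with s ≤ x ∧ x ≤ t, (X - 1 : Polynomial ℚ) ^ (ρ x - ρ s).toNat *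
      ((-1) ^ (ρ t - ρ x).toNat * (X - 1) ^ (ρ t - ρ x).toNat) = 0 := by
  have : ∀ x ∈ Finset.univ.filter (fun x => s ≤ x ∧ x ≤ t),
      (X - 1 : Polynomial ℚ) ^ (ρ x - ρ s).toNat *
      ((-1) ^ (ρ t - ρ x).toNat * (X - 1) ^ (ρ t - ρ x).toNat) =
      (-1) ^ (ρ t - ρ x).toNat * (X - 1) ^ (ρ t - ρ s).toNat := by
    intro x hx
    simp only [Finset.mem_filter, Finset.mem_univ, true_and] at hx
    have h1 := hρ.monotone hx.1
    have h2 := hρ.monotone hx.2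
    have : (ρ t - ρ s).toNat = (ρ x - ρ s).toNat + (ρ t - ρ x).toNat := by omega
    rw [this, pow_add]; ring
  rw [Finset.sum_congr rfl this, ← Finset.sum_mul, hE s t hst, zero_mul]

theorem filter_Icc_split (s t : α) (h : s ≤ t) (f : α → Polynomial ℚ) :
    ∑ x : α with s ≤ x ∧ x ≤ t, f x = (∑ x : α with s ≤ x ∧ x < t, f x) + f t := by
  have : (Finset.univ.filter (fun x => s ≤ x ∧ x ≤ t)) =
      insert t (Finset.univ.filter (fun x => s ≤ x ∧ x < t)) := by
    ext x
    simp only [Finset.mem_filter, Finset.mem_univ, true_and, Finset.mem_insert]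
    constructor
    · rintro ⟨h1, h2⟩
      rcases h2.eq_or_lt with h3 | h3
      · exact Or.inl h3
      · exact Or.inr ⟨h1, h3⟩
    · rintro (rfl | ⟨h1, h2⟩)
      · exact ⟨h, le_rfl⟩
      · exact ⟨h1, h2.le⟩
  rw [this, Finset.sum_insert (by simp), add_comm]

theorem filter_Icc_split' (s t : α) (h : s ≤ t) (f : α → Polynomial ℚ) :
    ∑ x : α with s ≤ x ∧ x ≤ t, f x = (∑ x : α with s < x ∧ x ≤ t, f x) + f s := by
  have : (Finset.univ.filter (fun x => s ≤ x ∧ x ≤ t)) =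
      insert s (Finset.univ.filter (fun x => s < x ∧ x ≤ t)) := by
    ext x
    simp only [Finset.mem_filter, Finset.mem_univ, true_and, Finset.mem_insert]
    constructor
    · rintro ⟨h1, h2⟩
      rcases h1.eq_or_lt with h3 | h3
      · exact Or.inl h3.symm
      · exact Or.inr ⟨h3, h2⟩
    · rintro (rfl | ⟨h1, h2⟩)
      · exact ⟨le_rfl, h⟩
      · exact ⟨h1.le, h2⟩
  rw [this, Finset.sum_insert (by simp), add_comm]

theorem kls (ρ : α → ℤ) (hρ : StrictMono ρ) (hE : EulerC ρ) (g : α → α → Polynomial ℚ)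
    (g1 : ∀ s, g s s = 1)
    (g2 : ∀ s t, s < t → g s t = truncG (ρ t - ρ s - 1)
      (∑ x : α with s ≤ x ∧ x < t, g s x * (X - 1) ^ (ρ t - ρ x - 1).toNat)) :
    ∀ s t, s ≤ t → (s < t → 2 * (g s t).natDegree < (ρ t - ρ s).toNat) ∧
      ∑ x : α with s ≤ x ∧ x ≤ t, g s x * (X - 1) ^ (ρ t - ρ x).toNat =
        reflect (ρ t - ρ s).toNat (g s t) := by
  intro s t
  induction t using WellFoundedLT.induction with
  | ind t ih =>
  intro hst
  rcases hst.eq_or_lt with rfl | hlt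
  · refine ⟨fun h => (lt_irrefl _ h).elim, ?_⟩
    have : Finset.univ.filter (fun x => s ≤ x ∧ x ≤ s) = {s} := by
      ext x; simp [le_antisymm_iff, and_comm]
    rw [this]; simp [g1]
  have hdegx : ∀ x, s ≤ x → x < t → (g s x).natDegree ≤ (ρ x - ρ s).toNat := by
    intro x h1 h2
    rcases h1.eq_or_lt with rfl | h3
    · simp [g1]
    · have := (ih x h2 h1).1 h3; omega
  have hr : 0 < (ρ t - ρ s).toNat := by have := hρ hlt; omega
  set h := ∑ x : α with s ≤ x ∧ x < t, g s x * (X - 1) ^ (ρ t - ρ x - 1).toNat with hh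
  have hQ : (X - 1) * h = ∑ x : α with s ≤ x ∧ x < t, g s x * (X - 1) ^ (ρ t - ρ x).toNat := by
    rw [hh, Finset.mul_sum]
    refine Finset.sum_congr rfl fun x hx => ?_
    simp only [Finset.mem_filter, Finset.mem_univ, true_and] at hx
    have h2 := hρ hx.2
    have : (ρ t - ρ x).toNat = (ρ t - ρ x - 1).toNat + 1 := by omega
    rw [this, pow_succ]; ring
  have hdeg : ((X - 1) * h).natDegree ≤ (ρ t - ρ s).toNat := by
    rw [hQ]
    refine natDegree_sum_le_of_forall_le _ _ fun x hx => ?_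
    simp only [Finset.mem_filter, Finset.mem_univ, true_and] at hx
    refine natDegree_mul_le.trans ?_
    have h1 := hdegx x hx.1 hx.2
    have h2 := natDegree_kappa (ρ t - ρ x).toNat
    have h3 := hρ hx.2
    have h4 := hρ.monotone hx.1
    omega
  have hrefl : reflect (ρ t - ρ s).toNat ((X - 1) * h) = -((X - 1) * h) := by
    rw [hQ, reflect_sum']
    have e1 : ∀ x ∈ Finset.univ.filter (fun x => s ≤ x ∧ x < t),
        reflect (ρ t - ρ s).toNat (g s x * (X - 1) ^ (ρ t - ρ x).toNat) =
        ∑ y : α with s ≤ y ∧ y ≤ x, g s y * ((X - 1) ^ (ρ x - ρ y).toNat *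
          ((-1) ^ (ρ t - ρ x).toNat * (X - 1) ^ (ρ t - ρ x).toNat)) := by
      intro x hx
      simp only [Finset.mem_filter, Finset.mem_univ, true_and] at hx
      have h3 := hρ hx.2
      have h4 := hρ.monotone hx.1
      have : (ρ t - ρ s).toNat = (ρ x - ρ s).toNat + (ρ t - ρ x).toNat := by omega
      rw [this, reflect_mul _ _ (hdegx x hx.1 hx.2) (natDegree_kappa _), reflect_kappa,
        ← (ih x hx.2 hx.1).2, Finset.sum_mul]
      refine Finset.sum_congr rfl fun y hy => ?_
      ring
    rw [Finset.sum_congr rfl e1]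
    rw [Finset.sum_comm' (s' := fun y => Finset.univ.filter (fun x => y ≤ x ∧ x < t))
      (t' := Finset.univ.filter (fun x => s ≤ x ∧ x < t))]
    · rw [← Finset.sum_neg_distrib]
      refine Finset.sum_congr rfl fun y hy => ?_
      simp only [Finset.mem_filter, Finset.mem_univ, true_and] at hy
      rw [← Finset.mul_sum]
      have := kappa_inv ρ hρ hE y t hy.2
      rw [filter_Icc_split y t hy.2.le] at this
      simp only [sub_self, Int.toNat_zero, pow_zero, mul_one] at this
      rw [eq_neg_of_add_eq_zero_left this]; ring
    · intro x y
      simp only [Finset.mem_filter, Finset.mem_univ, true_and]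
      constructor
      · rintro ⟨⟨a, b⟩, c, d⟩
        exact ⟨⟨d, b⟩, c, d.trans_lt b⟩
      · rintro ⟨⟨a, b⟩, c, d⟩
        exact ⟨⟨c.trans a, b⟩, c, a⟩
  have key := trunc_antisym (ρ t - ρ s).toNat hr (ρ t - ρ s - 1) (by omega) h hrefl hdeg
  rw [← g2 s t hlt] at key
  refine ⟨fun _ => key.1, ?_⟩
  rw [filter_Icc_split s t hst, ← hQ, key.2]
  simp

theorem recip (ρ : α → ℤ) (hρ : StrictMono ρ) (hE : EulerC ρ) (g f : α → α → Polynomial ℚ)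
    (g1 : ∀ s, g s s = 1)
    (g2 : ∀ s t, s < t → g s t = truncG (ρ t - ρ s - 1)
      (∑ x : α with s ≤ x ∧ x < t, g s x * (X - 1) ^ (ρ t - ρ x - 1).toNat))
    (f1 : ∀ s, f s s = 1)
    (f2 : ∀ s t, s < t → f s t = truncG (ρ t - ρ s - 1)
      (∑ x : α with s < x ∧ x ≤ t, f x t * (X - 1) ^ (ρ x - ρ s - 1).toNat)) :
    ∀ s t, s < t → ∑ x : α with s ≤ x ∧ x ≤ t,
      f s x * ((-1) ^ (ρ t - ρ x).toNat * g x t) = 0 := by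
  have hg := kls ρ hρ hE g g1 g2
  have hf : ∀ s t, s ≤ t → (s < t → 2 * (f s t).natDegree < (ρ t - ρ s).toNat) ∧
      ∑ x : α with s ≤ x ∧ x ≤ t, (X - 1) ^ (ρ x - ρ s).toNat * f x t =
        reflect (ρ t - ρ s).toNat (f s t) := by
    have := kls (α := αᵒᵈ) (fun x => - ρ (OrderDual.ofDual x)) (fun a b hab => neg_lt_neg (hρ hab))
      (by
        intro t s hts
        have hts' : OrderDual.ofDual s < OrderDual.ofDual t := hts
        have h := hE _ _ hts'
        have h5 : ∑ x : α with OrderDual.ofDual s ≤ x ∧ x ≤ OrderDual.ofDual t,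
            (-1 : Polynomial ℚ) ^ (ρ x - ρ (OrderDual.ofDual s)).toNat = 0 := by
          have : ∀ x ∈ Finset.univ.filter (fun x => OrderDual.ofDual s ≤ x ∧ x ≤ OrderDual.ofDual t),
            (-1 : Polynomial ℚ) ^ (ρ x - ρ (OrderDual.ofDual s)).toNat =
            (-1) ^ (ρ (OrderDual.ofDual t) - ρ (OrderDual.ofDual s)).toNat *
              (-1) ^ (ρ (OrderDual.ofDual t) - ρ x).toNat := by
            intro x hx
            simp only [Finset.mem_filter, Finset.mem_univ, true_and] at hx
            have h1 := hρ.monotone hx.1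
            have h2 := hρ.monotone hx.2
            have : (ρ (OrderDual.ofDual t) - ρ (OrderDual.ofDual s)).toNat =
              (ρ x - ρ (OrderDual.ofDual s)).toNat + (ρ (OrderDual.ofDual t) - ρ x).toNat := by omega
            rw [this, pow_add, mul_assoc, ← mul_pow]; simp
          rw [Finset.sum_congr rfl this, ← Finset.mul_sum, h, mul_zero]
        rw [← h5]
        refine Finset.sum_bij (fun x _ => OrderDual.ofDual x) ?_ ?_ ?_ ?_
        · intro x hx
          simp only [Finset.mem_filter, Finset.mem_univ, true_and] at hx ⊢
          exact ⟨hx.2, hx.1⟩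
        · intro x _ y _ h; exact h
        · intro x hx
          simp only [Finset.mem_filter, Finset.mem_univ, true_and] at hx
          exact ⟨OrderDual.toDual x, by simpa using ⟨hx.2, hx.1⟩, rfl⟩
        · intro x _
          congr 2; ring)
      (fun a b => f (OrderDual.ofDual b) (OrderDual.ofDual a)) (fun s => f1 _)
      (by
        intro t s hts
        have hts' : OrderDual.ofDual s < OrderDual.ofDual t := hts
        show f _ _ = _
        rw [f2 _ _ hts']
        congr 1
        · ring
        refine Finset.sum_bij (fun x _ => OrderDual.toDual x) ?_ ?_ ?_ ?_
        · intro x hx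
          simp only [Finset.mem_filter, Finset.mem_univ, true_and] at hx ⊢
          exact ⟨hx.2, hx.1⟩
        · intro x _ y _ h; exact h
        · intro x hx
          simp only [Finset.mem_filter, Finset.mem_univ, true_and] at hx
          exact ⟨OrderDual.ofDual x, by simpa using ⟨hx.2, hx.1⟩, rfl⟩
        · intro x _
          simp only [OrderDual.ofDual_toDual]
          congr 3; ring)
    intro s t hst
    have h := this (OrderDual.toDual t) (OrderDual.toDual s) hst
    simp only [OrderDual.ofDual_toDual] at h
    have e : (-ρ s - -ρ t) = ρ t - ρ s := by ring
    rw [e] at h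
    refine ⟨fun hh => h.1 hh, ?_⟩
    rw [← h.2]
    refine Finset.sum_bij (fun x _ => OrderDual.toDual x) ?_ ?_ ?_ ?_
    · intro x hx
      simp only [Finset.mem_filter, Finset.mem_univ, true_and] at hx ⊢
      exact ⟨hx.2, hx.1⟩
    · intro x _ y _ h; exact h
    · intro x hx
      simp only [Finset.mem_filter, Finset.mem_univ, true_and] at hx
      exact ⟨OrderDual.ofDual x, by simpa using ⟨hx.2, hx.1⟩, rfl⟩
    · intro x _
      simp only [OrderDual.ofDual_toDual]
      rw [mul_comm]
      congr 3; ring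
  -- degree bounds
  have dg : ∀ s t, s ≤ t → 2 * (g s t).natDegree ≤ (ρ t - ρ s).toNat := by
    intro s t h
    rcases h.eq_or_lt with rfl | h'
    · simp [g1]
    · exact ((hg s t h).1 h').le
  have df : ∀ s t, s ≤ t → 2 * (f s t).natDegree ≤ (ρ t - ρ s).toNat := by
    intro s t h
    rcases h.eq_or_lt with rfl | h'
    · simp [f1]
    · exact ((hf s t h).1 h').le
  have dsgn : ∀ (n : ℕ) (p : Polynomial ℚ), ((-1) ^ n * p).natDegree = p.natDegree := by
    intro n p
    rcases neg_one_pow_eq_or (Polynomial ℚ) n with h | h <;> simp [h]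
  have main : ∀ n : ℕ, ∀ s t, s < t → (ρ t - ρ s).toNat = n → ∑ x : α with s ≤ x ∧ x ≤ t,
      f s x * ((-1) ^ (ρ t - ρ x).toNat * g x t) = 0 := by
    intro n
    induction n using Nat.strong_induction_on with
    | _ n ih =>
    intro s t hst hn
    set S := ∑ x : α with s ≤ x ∧ x ≤ t, f s x * ((-1) ^ (ρ t - ρ x).toNat * g x t) with hS
    have hpos := hρ hst
    apply eq_zero_of_reflect n
    · rw [hS, reflect_sum']
      have e1 : ∀ x ∈ Finset.univ.filter (fun x => s ≤ x ∧ x ≤ t),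
          reflect n (f s x * ((-1) ^ (ρ t - ρ x).toNat * g x t)) =
          ∑ q : α × α with (s ≤ q.1 ∧ q.1 ≤ x) ∧ (x ≤ q.2 ∧ q.2 ≤ t),
            (X - 1) ^ (ρ q.1 - ρ s).toNat * ((-1) ^ (ρ t - ρ q.2).toNat *
              (X - 1) ^ (ρ t - ρ q.2).toNat) *
              (f q.1 x * ((-1) ^ (ρ q.2 - ρ x).toNat * g x q.2)) := by
        intro x hx
        simp only [Finset.mem_filter, Finset.mem_univ, true_and] at hx
        have h3 := hρ.monotone hx.2
        have h4 := hρ.monotone hx.1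
        have hn' : n = (ρ x - ρ s).toNat + (ρ t - ρ x).toNat := by omega
        have hd1 := df s x hx.1
        have hd2 := dg x t hx.2
        rw [hn', reflect_mul _ _ (by omega) (by rw [dsgn]; omega)]
        have : reflect (ρ t - ρ x).toNat ((-1) ^ (ρ t - ρ x).toNat * g x t) =
            (-1) ^ (ρ t - ρ x).toNat * reflect (ρ t - ρ x).toNat (g x t) := by
          rcases neg_one_pow_eq_or (Polynomial ℚ) (ρ t - ρ x).toNat with h | h <;> simp [h]
        rw [this, ← (hf s x hx.1).2, ← (hg x t hx.2).2, Finset.mul_sum, Finset.sum_mul_sum,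
          ← Finset.sum_product']
        refine Finset.sum_congr ?_ ?_
        · ext q; simp
        · intro q hq
          simp only [Finset.mem_filter, Finset.mem_univ, true_and] at hq
          have h5 := hρ.monotone hq.2.1
          have h6 := hρ.monotone hq.2.2
          have : (ρ t - ρ x).toNat = (ρ t - ρ q.2).toNat + (ρ q.2 - ρ x).toNat := by omega
          rw [this, pow_add]; ring
      rw [Finset.sum_congr rfl e1]
      rw [Finset.sum_comm' (s' := fun q : α × α => Finset.univ.filter (fun x => q.1 ≤ x ∧ x ≤ q.2))
        (t' := Finset.univ.filter (fun q : α × α => s ≤ q.1 ∧ q.1 ≤ q.2 ∧ q.2 ≤ t))]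
      · simp only [← Finset.mul_sum]
        have e2 : ∀ q ∈ Finset.univ.filter (fun q : α × α => s ≤ q.1 ∧ q.1 ≤ q.2 ∧ q.2 ≤ t),
          (X - 1) ^ (ρ q.1 - ρ s).toNat * ((-1) ^ (ρ t - ρ q.2).toNat *
              (X - 1) ^ (ρ t - ρ q.2).toNat) *
              (∑ x : α with q.1 ≤ x ∧ x ≤ q.2,
                (f q.1 x * ((-1) ^ (ρ q.2 - ρ x).toNat * g x q.2))) =
          (if q = (s, t) then S else 0) + (if q.1 = q.2 then (X - 1) ^ (ρ q.1 - ρ s).toNat *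
            ((-1) ^ (ρ t - ρ q.1).toNat * (X - 1) ^ (ρ t - ρ q.1).toNat) else 0) := by
          rintro ⟨a, b⟩ hq
          simp only [Finset.mem_filter, Finset.mem_univ, true_and] at hq
          obtain ⟨ha, hab, hb⟩ := hq
          simp only
          rcases hab.eq_or_lt with rfl | hab'
          · have : (Finset.univ.filter (fun x => a ≤ x ∧ x ≤ a)) = {a} := by
              ext x; simp [le_antisymm_iff, and_comm]
            rw [this]
            have : ((a, a) : α × α) ≠ (s, t) := by
              rintro h
              simp only [Prod.mk.injEq] at h
              exact hst.ne (h.1.symm.trans h.2)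
            rw [if_neg this]
            simp [f1, g1]
          · rw [if_neg hab'.ne]
            by_cases h : ((a, b) : α × α) = (s, t)
            · rw [if_pos h]
              simp only [Prod.mk.injEq] at h
              obtain ⟨rfl, rfl⟩ := h
              simp [hS]
            · rw [if_neg h]
              have h1 := hρ.monotone ha
              have h2 := hρ.monotone hb
              have h3 := hρ hab'
              have : (ρ b - ρ a).toNat < n := by
                rcases ha.eq_or_lt with rfl | ha'
                · rcases hb.eq_or_lt with rfl | hb'
                  · exact (h rfl).elim
                  · have := hρ hb'; omega
                · have := hρ ha'; omega
              rw [ih _ this a b hab' rfl]; simp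
        rw [Finset.sum_congr rfl e2, Finset.sum_add_distrib, Finset.sum_ite_eq', if_pos (by simp [hst.le])]
        have e3 : ∑ q : α × α with s ≤ q.1 ∧ q.1 ≤ q.2 ∧ q.2 ≤ t,
            (if q.1 = q.2 then (X - 1 : Polynomial ℚ) ^ (ρ q.1 - ρ s).toNat *
            ((-1) ^ (ρ t - ρ q.1).toNat * (X - 1) ^ (ρ t - ρ q.1).toNat) else 0) = 0 := by
          rw [← Finset.sum_filter, ← kappa_inv ρ hρ hE s t hst]
          refine Finset.sum_bij' (fun q _ => q.1) (fun x _ => (x, x)) ?_ ?_ ?_ ?_ ?_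
          · rintro ⟨a, b⟩ h
            simp only [Finset.mem_filter, Finset.mem_univ, true_and] at h ⊢
            exact ⟨h.1.1, h.1.2.1.trans h.1.2.2⟩
          · intro a h
            simp only [Finset.mem_filter, Finset.mem_univ, true_and] at h ⊢
            exact ⟨⟨h.1, le_rfl, h.2⟩, trivial⟩
          · rintro ⟨a, b⟩ h
            simp only [Finset.mem_filter, Finset.mem_univ, true_and] at h ⊢
            rw [h.2]
          · intro a h; rfl
          · intro a h; rfl
        rw [e3, add_zero]
      · intro x q
        simp only [Finset.mem_filter, Finset.mem_univ, true_and]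
        constructor
        · rintro ⟨⟨a, b⟩, ⟨c, d⟩, e, f⟩
          exact ⟨⟨d, e⟩, c, d.trans e, f⟩
        · rintro ⟨⟨a, b⟩, c, d, e⟩
          exact ⟨⟨c.trans a, b.trans e⟩, ⟨c, a⟩, b, e⟩
    · have : S.natDegree ≤ (n - 1) / 2 := by
        refine natDegree_sum_le_of_forall_le _ _ fun x hx => ?_
        simp only [Finset.mem_filter, Finset.mem_univ, true_and] at hx
        refine natDegree_mul_le.trans ?_
        rw [dsgn]
        have h3 := hρ.monotone hx.2
        have h4 := hρ.monotone hx.1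
        have hd1 := df s x hx.1
        have hd2 := dg x t hx.2
        rcases hx.1.eq_or_lt with rfl | h
        · have := (hg s t hst.le).1 hst
          rw [f1]; simp; omega
        · have := (hf s x hx.1).1 h
          omega
      omega
  exact fun s t h => main _ s t h rfl

end Alg

section Geo1

variable {V : Type*} [AddCommGroup V] [Module ℝ V]

theorem cvx_mem {C : Set V} (hC : Convex ℝ C) {x y : V} (hx : x ∈ C) (hy : y ∈ C) {a b : ℝ}
    (ha : 0 ≤ a) (hb : 0 ≤ b) (hab : a + b = 1) : a • x + b • y ∈ C := hC hx hy ha hb hab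

theorem finrank_inf_ker (D : Submodule ℝ V) [FiniteDimensional ℝ D] (l : V →ₗ[ℝ] ℝ)
    (h : ∃ v ∈ D, l v ≠ 0) :
    Module.finrank ℝ (D ⊓ LinearMap.ker l : Submodule ℝ V) + 1 = Module.finrank ℝ D := by
  obtain ⟨v, hv, hl⟩ := h
  have h1 := LinearMap.finrank_range_add_finrank_ker (l.domRestrict D)
  have h2 : LinearMap.range (l.domRestrict D) = ⊤ := by
    rw [LinearMap.range_eq_top]
    intro c
    refine ⟨(c / l v) • ⟨v, hv⟩, ?_⟩
    simp [hl]
  rw [h2, finrank_top, Module.finrank_self] at h1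
  have h3 : LinearMap.ker (l.domRestrict D) = (D ⊓ LinearMap.ker l).comap D.subtype := by
    ext x; simp
  have h4 := (Submodule.comapSubtypeEquivOfLe (inf_le_left : D ⊓ LinearMap.ker l ≤ D)).finrank_eq
  rw [h3] at h1
  omega

/-- relatively open convex sets -/
def RO (C : Set V) : Prop := Convex ℝ C ∧ ∀ x ∈ C, ∀ y ∈ C, ∃ ε : ℝ, 0 < ε ∧ x + ε • (x - y) ∈ C

theorem RO.nhd {C : Set V} (hC : RO C) {x : V} (hx : x ∈ C) {v : V} (hv : v ∈ vectorSpan ℝ C) :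
    ∃ ε : ℝ, 0 < ε ∧ ∀ s : ℝ, |s| ≤ ε → x + s • v ∈ C := by
  have shrink : ∀ (v : V) (ε : ℝ), 0 < ε → x + ε • v ∈ C → x - ε • v ∈ C →
      ∀ s : ℝ, |s| ≤ ε → x + s • v ∈ C := by
    intro v ε hε h1 h2 s hs
    have := abs_le.1 hs
    have h := cvx_mem hC.1 h1 h2 (a := (ε + s) / (2 * ε)) (b := (ε - s) / (2 * ε))
      (div_nonneg (by linarith) (by linarith)) (div_nonneg (by linarith) (by linarith))
      (by field_simp; ring)
    convert h using 1
    match_scalars <;> field_simp <;> ring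
  rw [vectorSpan_eq_span_vsub_set_right ℝ hx] at hv
  induction hv using Submodule.span_induction with
  | mem v hv =>
    obtain ⟨y, hy, rfl⟩ := hv
    obtain ⟨ε, hε, h⟩ := hC.2 x hx y hy
    simp only [vsub_eq_sub]
    have hm : 0 < min ε 1 := lt_min hε one_pos
    refine ⟨min ε 1, hm, shrink _ _ hm ?_ ?_⟩
    · have := cvx_mem hC.1 hx hy (a := 1 - min ε 1) (b := min ε 1) (by linarith [min_le_right ε 1]) hm.le
        (by ring)
      convert this using 1
      module
    · have h0 : min ε 1 / ε ≤ 1 := by rw [div_le_one hε]; exact min_le_left _ _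
      have := cvx_mem hC.1 hx h (a := 1 - min ε 1 / ε) (b := min ε 1 / ε) (by linarith)
        (div_nonneg hm.le hε.le) (by ring)
      convert this using 1
      match_scalars <;> field_simp <;> ring
  | zero => exact ⟨1, one_pos, fun s _ => by simpa using hx⟩
  | add v w _ _ ihv ihw =>
    obtain ⟨ε, hε, h⟩ := ihv
    obtain ⟨δ, hδ, h'⟩ := ihw
    have hm : 0 < min ε δ := lt_min hε hδ
    refine ⟨min ε δ / 2, by linarith, fun s hs => ?_⟩
    have e1 : |2 * s| ≤ min ε δ := by rw [abs_mul, abs_two]; linarith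
    have := cvx_mem hC.1 (h (2 * s) (e1.trans (min_le_left _ _))) (h' (2 * s) (e1.trans (min_le_right _ _)))
      (a := 1 / 2) (b := 1 / 2) (by norm_num) (by norm_num) (by norm_num)
    convert this using 1
    module
  | smul a v _ ih =>
    obtain ⟨ε, hε, h⟩ := ih
    refine ⟨ε / (|a| + 1), by positivity, fun s hs => ?_⟩
    rw [smul_smul]
    apply h
    rw [abs_mul]
    rw [le_div_iff₀ (by positivity)] at hs
    nlinarith [abs_nonneg s, abs_nonneg a]

/-- sign of the RO set -/
noncomputable def eC (C : Set V) : ℤ := if C = ∅ then 0 else (-1) ^ Module.finrank ℝ (vectorSpan ℝ C)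

theorem RO.inter_pos {C : Set V} (hC : RO C) (l : V →ₗ[ℝ] ℝ) : RO (C ∩ {x | 0 < l x}) := by
  refine ⟨hC.1.inter (convex_halfSpace_gt l.isLinear 0), ?_⟩
  rintro x ⟨hx, hx'⟩ y ⟨hy, hy'⟩
  simp only [Set.mem_ofPred_eq] at hx' hy'
  obtain ⟨ε, hε, h⟩ := hC.nhd hx (vsub_mem_vectorSpan ℝ hx hy)
  simp only [vsub_eq_sub] at h
  have hp : 0 < min ε (l x / (|l x - l y| + 1)) := lt_min hε (by positivity)
  refine ⟨min ε (l x / (|l x - l y| + 1)), hp, h _ ?_, ?_⟩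
  · rw [abs_of_pos hp]; exact min_le_left _ _
  · simp only [Set.mem_ofPred_eq, map_add, map_smul, map_sub, smul_eq_mul]
    have h1 := min_le_right ε (l x / (|l x - l y| + 1))
    rw [le_div_iff₀ (by positivity)] at h1
    nlinarith [neg_abs_le (l x - l y)]

theorem RO.inter_zero {C : Set V} (hC : RO C) (l : V →ₗ[ℝ] ℝ) : RO (C ∩ {x | l x = 0}) := by
  refine ⟨hC.1.inter (convex_hyperplane l.isLinear 0), ?_⟩
  rintro x ⟨hx, hx'⟩ y ⟨hy, hy'⟩
  simp only [Set.mem_ofPred_eq] at hx' hy'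
  obtain ⟨ε, hε, h⟩ := hC.2 x hx y hy
  exact ⟨ε, hε, h, by simp [hx', hy']⟩

theorem RO.vs_pos {C : Set V} (hC : RO C) (l : V →ₗ[ℝ] ℝ) (h : (C ∩ {x | 0 < l x}).Nonempty) :
    vectorSpan ℝ (C ∩ {x | 0 < l x}) = vectorSpan ℝ C := by
  refine le_antisymm (vectorSpan_mono ℝ Set.inter_subset_left) ?_
  obtain ⟨x, hx, hx'⟩ := h
  simp only [Set.mem_ofPred_eq] at hx'
  intro v hv
  obtain ⟨ε, hε, h⟩ := hC.nhd hx hv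
  have hp : 0 < min ε (l x / (|l v| + 1)) := lt_min hε (by positivity)
  have h1 := min_le_right ε (l x / (|l v| + 1))
  have h2 := h _ ((abs_of_pos hp).le.trans (min_le_left _ _))
  set s := min ε (l x / (|l v| + 1))
  rw [le_div_iff₀ (by positivity)] at h1
  have h3 : x + s • v ∈ C ∩ {x | 0 < l x} := ⟨h2, by
    simp only [Set.mem_ofPred_eq, map_add, map_smul, smul_eq_mul]
    nlinarith [neg_abs_le (l v)]⟩
  have h4 := vsub_mem_vectorSpan ℝ h3 (show x ∈ C ∩ {x | 0 < l x} from ⟨hx, hx'⟩)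
  simp only [vsub_eq_sub, add_sub_cancel_left] at h4
  have := Submodule.smul_mem _ s⁻¹ h4
  rwa [smul_smul, inv_mul_cancel₀ hp.ne', one_smul] at this

theorem RO.vs_zero {C : Set V} (hC : RO C) (l : V →ₗ[ℝ] ℝ) (h : (C ∩ {x | l x = 0}).Nonempty) :
    vectorSpan ℝ (C ∩ {x | l x = 0}) = vectorSpan ℝ C ⊓ LinearMap.ker l := by
  obtain ⟨x, hx, hx'⟩ := h
  simp only [Set.mem_ofPred_eq] at hx'
  apply le_antisymm
  · refine le_inf (vectorSpan_mono ℝ Set.inter_subset_left) ?_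
    rw [vectorSpan, Submodule.span_le]
    rintro _ ⟨a, ha, b, hb, rfl⟩
    have h1 := ha.2
    have h2 := hb.2
    simp only [Set.mem_ofPred_eq] at h1 h2
    simp [h1, h2]
  · rintro v ⟨hv, hv'⟩
    have hv'' : l v = 0 := hv'
    obtain ⟨ε, hε, h⟩ := hC.nhd hx hv
    have h2 := h ε (abs_of_pos hε).le
    have h3 : x + ε • v ∈ C ∩ {x | l x = 0} := ⟨h2, by simp [hx', hv'']⟩
    have h4 := vsub_mem_vectorSpan ℝ h3 (show x ∈ C ∩ {x | l x = 0} from ⟨hx, hx'⟩)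
    simp only [vsub_eq_sub, add_sub_cancel_left] at h4
    have := Submodule.smul_mem _ ε⁻¹ h4
    rwa [smul_smul, inv_mul_cancel₀ hε.ne', one_smul] at this

theorem RO.neg_of {C : Set V} (hC : RO C) (l : V →ₗ[ℝ] ℝ) {x y : V} (hx : x ∈ C) (hx0 : l x = 0)
    (hy : y ∈ C) (hy0 : 0 < l y) : ∃ w ∈ C, 0 < (-l) w := by
  obtain ⟨ε, hε, h⟩ := hC.2 x hx y hy
  refine ⟨_, h, ?_⟩
  simp [hx0]; positivity

theorem RO.zero_of {C : Set V} (hC : RO C) (l : V →ₗ[ℝ] ℝ) {x y : V} (hx : x ∈ C) (hx0 : 0 < (-l) x)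
    (hy : y ∈ C) (hy0 : 0 < l y) : ∃ w ∈ C, l w = 0 := by
  simp only [LinearMap.neg_apply] at hx0
  have hd : 0 < l y - l x := by linarith
  refine ⟨_, cvx_mem hC.1 hx hy (a := l y / (l y - l x)) (b := - l x / (l y - l x))
    (div_nonneg hy0.le hd.le) (div_nonneg (by linarith) hd.le) (by field_simp; ring), ?_⟩
  simp; field_simp; ring

theorem eC_split {C : Set V} (hC : RO C) [FiniteDimensional ℝ (vectorSpan ℝ C)] (l : V →ₗ[ℝ] ℝ) :
    eC C = eC (C ∩ {x | 0 < l x}) + eC (C ∩ {x | l x = 0}) + eC (C ∩ {x | 0 < (-l) x}) := by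
  by_cases hp : (C ∩ {x | 0 < l x}).Nonempty
  · by_cases hz : (C ∩ {x | l x = 0}).Nonempty
    · have hn : (C ∩ {x | 0 < (-l) x}).Nonempty := by
        obtain ⟨x, hx, hx'⟩ := hz
        obtain ⟨y, hy, hy'⟩ := hp
        obtain ⟨w, hw, hw'⟩ := hC.neg_of l hx hx' hy hy'
        exact ⟨w, hw, hw'⟩
      have hne : C.Nonempty := hp.mono Set.inter_subset_left
      unfold eC
      rw [if_neg hp.ne_empty, if_neg hz.ne_empty, if_neg hn.ne_empty, if_neg hne.ne_empty,
        hC.vs_pos _ hp, hC.vs_pos _ hn, hC.vs_zero _ hz]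
      have := finrank_inf_ker (vectorSpan ℝ C) l (by
        obtain ⟨x, hx, hx'⟩ := hz
        obtain ⟨y, hy, hy'⟩ := hp
        simp only [Set.mem_ofPred_eq] at hx' hy'
        refine ⟨_, vsub_mem_vectorSpan ℝ hy hx, ?_⟩
        simp [hx', hy'.ne'])
      rw [← this, pow_succ]; ring
    · have hn : ¬ (C ∩ {x | 0 < (-l) x}).Nonempty := by
        rintro ⟨x, hx, hx'⟩
        obtain ⟨y, hy, hy'⟩ := hp
        obtain ⟨w, hw, hw'⟩ := hC.zero_of l hx hx' hy hy'
        exact hz ⟨w, hw, hw'⟩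
      have : C ∩ {x | 0 < l x} = C := by
        refine Set.inter_eq_left.2 fun x hx => ?_
        rcases lt_trichotomy (l x) 0 with h | h | h
        · exact (hn ⟨x, hx, by simpa using h⟩).elim
        · exact (hz ⟨x, hx, h⟩).elim
        · exact h
      rw [this, Set.not_nonempty_iff_eq_empty.1 hn, Set.not_nonempty_iff_eq_empty.1 hz]
      simp [eC]
  · by_cases hz : (C ∩ {x | l x = 0}).Nonempty
    · have hn : ¬ (C ∩ {x | 0 < (-l) x}).Nonempty := by
        rintro ⟨y, hy, hy'⟩
        obtain ⟨x, hx, hx'⟩ := hz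
        simp only [Set.mem_ofPred_eq] at hx' hy'
        obtain ⟨w, hw, hw'⟩ := hC.neg_of (-l) hx (by simp [hx']) hy hy'
        exact hp ⟨w, hw, by simpa using hw'⟩
      have : C ∩ {x | l x = 0} = C := by
        refine Set.inter_eq_left.2 fun x hx => ?_
        rcases lt_trichotomy (l x) 0 with h | h | h
        · exact (hn ⟨x, hx, by simpa using h⟩).elim
        · exact h
        · exact (hp ⟨x, hx, h⟩).elim
      rw [this, Set.not_nonempty_iff_eq_empty.1 hn, Set.not_nonempty_iff_eq_empty.1 hp]
      simp [eC]
    · have : C ∩ {x | 0 < (-l) x} = C := by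
        refine Set.inter_eq_left.2 fun x hx => ?_
        rcases lt_trichotomy (l x) 0 with h | h | h
        · simpa using h
        · exact (hz ⟨x, hx, h⟩).elim
        · exact (hp ⟨x, hx, h⟩).elim
      rw [this, Set.not_nonempty_iff_eq_empty.1 hz, Set.not_nonempty_iff_eq_empty.1 hp]
      simp [eC]

theorem fd_mono {C D : Set V} (h : C ⊆ D) [FiniteDimensional ℝ (vectorSpan ℝ D)] :
    FiniteDimensional ℝ (vectorSpan ℝ C) :=
  Submodule.finiteDimensional_of_le (vectorSpan_mono ℝ h)

theorem eC_partition {ι : Type*} [Fintype ι] (A : List (V →ₗ[ℝ] ℝ)) :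
    ∀ (C : Set V) (D : ι → Set V), FiniteDimensional ℝ (vectorSpan ℝ C) → RO C → (∀ i, RO (D i)) →
      (⋃ i, D i) = C →
      (∀ i j x y, x ∈ D i → y ∈ D j → (∀ l ∈ A, (0 < l x ↔ 0 < l y) ∧ (l x = 0 ↔ l y = 0)) → i = j) →
      eC C = ∑ i, eC (D i) := by
  induction A with
  | nil =>
    intro C D _ hC hD hU hsep
    by_cases hne : C.Nonempty
    · obtain ⟨x, hx⟩ := hne
      rw [← hU, Set.mem_iUnion] at hx
      obtain ⟨i, hi⟩ := hx
      have hj : ∀ j, j ≠ i → D j = ∅ := by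
        intro j hji
        by_contra h
        obtain ⟨y, hy⟩ := Set.nonempty_iff_ne_empty.2 h
        exact hji (hsep j i y x hy hi (by simp))
      have : C = D i := by
        rw [← hU]
        refine subset_antisymm (Set.iUnion_subset fun j => ?_) (Set.subset_iUnion D i)
        by_cases h : j = i
        · rw [h]
        · rw [hj j h]; exact Set.empty_subset _
      rw [Finset.sum_eq_single i, this]
      · intro j _ h; rw [hj j h]; simp [eC]
      · simp
    · rw [Set.not_nonempty_iff_eq_empty] at hne
      have : ∀ i, D i = ∅ := fun i => by
        rw [← Set.subset_empty_iff, ← hne, ← hU]; exact Set.subset_iUnion D i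
      simp [hne, this, eC]
  | cons l A ih =>
    intro C D _ hC hD hU hsep
    have hsub : ∀ i, D i ⊆ C := fun i => by rw [← hU]; exact Set.subset_iUnion D i
    have : ∀ i, FiniteDimensional ℝ (vectorSpan ℝ (D i)) := fun i => fd_mono (hsub i)
    rw [eC_split hC l]
    simp_rw [fun i => eC_split (hD i) l]
    rw [Finset.sum_add_distrib, Finset.sum_add_distrib]
    congr 1
    · congr 1
      · apply ih _ _ (fd_mono Set.inter_subset_left) (hC.inter_pos l) (fun i => (hD i).inter_pos l)
        · rw [← Set.iUnion_inter, hU]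
        · rintro i j x y ⟨hx, hx'⟩ ⟨hy, hy'⟩ h
          simp only [Set.mem_ofPred_eq] at hx' hy'
          refine hsep i j x y hx hy ?_
          simp only [List.mem_cons, forall_eq_or_imp]
          exact ⟨⟨by simp [hx', hy'], by simp [hx'.ne', hy'.ne']⟩, h⟩
      · apply ih _ _ (fd_mono Set.inter_subset_left) (hC.inter_zero l) (fun i => (hD i).inter_zero l)
        · rw [← Set.iUnion_inter, hU]
        · rintro i j x y ⟨hx, hx'⟩ ⟨hy, hy'⟩ h
          simp only [Set.mem_ofPred_eq] at hx' hy'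
          refine hsep i j x y hx hy ?_
          simp only [List.mem_cons, forall_eq_or_imp]
          exact ⟨⟨by simp [hx', hy'], by simp [hx', hy']⟩, h⟩
    · apply ih _ _ (fd_mono Set.inter_subset_left) (hC.inter_pos _) (fun i => (hD i).inter_pos _)
      · rw [← Set.iUnion_inter, hU]
      · rintro i j x y ⟨hx, hx'⟩ ⟨hy, hy'⟩ h
        simp only [Set.mem_ofPred_eq, LinearMap.neg_apply, Left.neg_pos_iff] at hx' hy'
        refine hsep i j x y hx hy ?_
        simp only [List.mem_cons, forall_eq_or_imp]
        exact ⟨⟨by simp [hx'.not_gt, hy'.not_gt], by simp [hx'.ne, hy'.ne]⟩, h⟩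

end Geo1

section Geo2

variable {V : Type*} [AddCommGroup V] [Module ℝ V]

theorem IsPolytope.convex {P : Set V} (hP : IsPolytope P) : Convex ℝ P := by
  obtain ⟨S, rfl⟩ := hP; exact convex_convexHull ℝ _

theorem IsPolytope.fd {P : Set V} (hP : IsPolytope P) : FiniteDimensional ℝ (vectorSpan ℝ P) := by
  obtain ⟨S, rfl⟩ := hP
  rw [← direction_affineSpan, affineSpan_convexHull, direction_affineSpan]
  exact finiteDimensional_vectorSpan_of_finite ℝ S.finite_toSet

theorem IsFace.subset {P F : Set V} (h : IsFace P F) : F ⊆ P := by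
  rcases h with rfl | rfl | ⟨l, rfl⟩
  · exact subset_rfl
  · exact Set.empty_subset _
  · exact fun x hx => hx.1

theorem argmax_hull (S : Finset V) (l : V →ₗ[ℝ] ℝ) (F : Set V)
    (hF : F = {x | x ∈ convexHull ℝ (S : Set V) ∧ ∀ y ∈ convexHull ℝ (S : Set V), l y ≤ l x}) :
    F = convexHull ℝ (S.filter (· ∈ F) : Set V) := by
  apply subset_antisymm
  · intro x hx
    have hx0 := hx
    rw [hF] at hx
    obtain ⟨hxP, hmax⟩ := hx
    have hxP' := hxP
    rw [Finset.mem_convexHull'] at hxP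
    obtain ⟨w, hw0, hw1, hwx⟩ := hxP
    have hsum : ∑ s ∈ S, w s * (l x - l s) = 0 := by
      have : l (∑ s ∈ S, w s • s) = l x := by rw [hwx]
      simp only [map_sum, map_smul, smul_eq_mul] at this
      simp only [mul_sub, Finset.sum_sub_distrib, ← Finset.sum_mul, hw1, this]
      ring
    have hz : ∀ s ∈ S, w s * (l x - l s) = 0 := by
      rw [Finset.sum_eq_zero_iff_of_nonneg] at hsum
      · exact hsum
      · intro s hs
        exact mul_nonneg (hw0 s hs) (sub_nonneg.2 (hmax s (subset_convexHull ℝ _ hs)))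
    have hz' : ∀ s ∈ S, s ∉ F → w s = 0 := by
      intro s hs hsF
      rcases mul_eq_zero.1 (hz s hs) with h | h
      · exact h
      · exfalso; apply hsF
        rw [hF]
        refine ⟨subset_convexHull ℝ _ hs, fun y hy => ?_⟩
        have := hmax y hy
        linarith
    rw [Finset.mem_convexHull']
    refine ⟨w, fun y hy => hw0 y (Finset.mem_filter.1 hy).1, ?_, ?_⟩
    · rw [← hw1]
      refine Finset.sum_subset (Finset.filter_subset _ _) ?_
      intro s hs hs'
      exact hz' s hs (fun h => hs' (Finset.mem_filter.2 ⟨hs, h⟩))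
    · rw [← hwx]
      refine Finset.sum_subset (Finset.filter_subset _ _) ?_
      intro s hs hs'
      rw [hz' s hs (fun h => hs' (Finset.mem_filter.2 ⟨hs, h⟩)), zero_smul]
  · have hc : Convex ℝ F := by
      rw [hF]
      intro x hx y hy a b ha hb hab
      refine ⟨convex_convexHull ℝ _ hx.1 hy.1 ha hb hab, fun w hw => ?_⟩
      have h1 := hx.2 w hw
      have h2 := hy.2 w hw
      simp only [map_add, map_smul, smul_eq_mul]
      have : l w = a * l w + b * l w := by rw [← add_mul, hab, one_mul]
      rw [this]
      gcongr
    refine convexHull_min ?_ hc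
    intro s hs
    exact (Finset.mem_filter.1 (Finset.mem_coe.1 hs)).2

theorem face_hull (S : Finset V) (F : Set V) (h : IsFace (convexHull ℝ (S : Set V)) F) :
    ∃ T ⊆ S, F = convexHull ℝ (T : Set V) := by
  rcases h with rfl | rfl | ⟨l, hl⟩
  · exact ⟨S, subset_rfl, rfl⟩
  · exact ⟨∅, by simp, by simp⟩
  · exact ⟨_, Finset.filter_subset _ _, argmax_hull S l F hl⟩

theorem IsPolytope.face {P F : Set V} (hP : IsPolytope P) (h : IsFace P F) : IsPolytope F := by
  obtain ⟨S, rfl⟩ := hP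
  obtain ⟨T, _, hT⟩ := face_hull S F h
  exact ⟨T, hT⟩

theorem IsPolytope.finite_faces {P : Set V} (hP : IsPolytope P) : {F | IsFace P F}.Finite := by
  obtain ⟨S, rfl⟩ := hP
  refine (S.powerset.finite_toSet.image (fun T : Finset V => convexHull ℝ (T : Set V))).subset ?_
  intro F hF
  obtain ⟨T, hT, rfl⟩ := face_hull S F hF
  exact ⟨T, by simpa using hT, rfl⟩

theorem IsFace.trans {P F K : Set V} (hP : IsPolytope P) (h1 : IsFace P F) (h2 : IsFace F K) :
    IsFace P K := by
  have h2' := h2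
  have hK := (hP.face h1).face h2
  by_cases hKe : K = ∅
  · exact Or.inr (Or.inl hKe)
  rcases h2 with rfl | rfl | ⟨m, hm⟩
  · exact h1
  · exact (hKe rfl).elim
  rcases h1 with rfl | rfl | ⟨l, hl⟩
  · exact h2'
  · exact (hKe (Set.subset_empty_iff.1 h2'.subset)).elim
  right; right
  obtain ⟨S, rfl⟩ := hP
  obtain ⟨k, hk⟩ := Set.nonempty_iff_ne_empty.2 hKe
  have hkF : k ∈ F := h2'.subset hk
  have hkP : k ∈ convexHull ℝ (S : Set V) := by rw [hl] at hkF; exact hkF.1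
  have hlmax : ∀ y ∈ convexHull ℝ (S : Set V), l y ≤ l k := by rw [hl] at hkF; exact hkF.2
  have hFiff : ∀ y ∈ convexHull ℝ (S : Set V), l k ≤ l y → y ∈ F := by
    intro y hy h
    rw [hl]; exact ⟨hy, fun w hw => (hlmax w hw).trans h⟩
  have hFl : ∀ y ∈ F, l y = l k := by
    intro y hy
    rw [hl] at hy
    exact le_antisymm (hlmax y hy.1) (hy.2 k hkP)
  have hmmax : ∀ y ∈ F, m y ≤ m k := by rw [hm] at hk; exact hk.2
  have hKiff : ∀ y ∈ F, m k ≤ m y → y ∈ K := by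
    intro y hy h
    rw [hm]; exact ⟨hy, fun w hw => (hmmax w hw).trans h⟩
  have hKm : ∀ y ∈ K, m y = m k := by
    intro y hy
    have := hy
    rw [hm] at this
    exact le_antisymm (hmmax y this.1) (this.2 k hkF)
  obtain ⟨M, hM⟩ := Finset.exists_le (S.image fun s => (m s - m k) / (l k - l s))
  set φ := (M + 1) • l + m with hφ
  have hφS : ∀ s ∈ S, φ s ≤ φ k ∧ (φ s = φ k → s ∈ K) := by
    intro s hs
    have hsP : s ∈ convexHull ℝ (S : Set V) := subset_convexHull ℝ _ hs
    by_cases hsF : s ∈ F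
    · have h1 := hFl s hsF
      have h2 := hmmax s hsF
      simp only [hφ, LinearMap.add_apply, LinearMap.smul_apply, smul_eq_mul, h1]
      exact ⟨by linarith, fun h => hKiff s hsF (by linarith)⟩
    · have h1 : l s < l k := lt_of_not_ge fun h => hsF (hFiff s hsP h)
      have h2 := hM _ (Finset.mem_image_of_mem _ hs)
      rw [div_le_iff₀ (by linarith)] at h2
      have h3 : φ s < φ k := by
        simp only [hφ, LinearMap.add_apply, LinearMap.smul_apply, smul_eq_mul]
        nlinarith
      exact ⟨h3.le, fun h => (h3.ne h).elim⟩
  have hφP : ∀ y ∈ convexHull ℝ (S : Set V), φ y ≤ φ k := by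
    have : convexHull ℝ (S : Set V) ⊆ {y | φ y ≤ φ k} :=
      convexHull_min (fun s hs => (hφS s hs).1) (convex_halfSpace_le φ.isLinear _)
    exact this
  refine ⟨φ, ?_⟩
  obtain ⟨E, hE⟩ : ∃ E, E = {x | x ∈ convexHull ℝ (S : Set V) ∧
    ∀ y ∈ convexHull ℝ (S : Set V), φ y ≤ φ x} := ⟨_, rfl⟩
  rw [← hE]
  apply subset_antisymm
  · intro y hy
    have hyF := h2'.subset hy
    have : φ y = φ k := by
      simp only [hφ, LinearMap.add_apply, LinearMap.smul_apply, hFl y hyF, hKm y hy]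
    rw [hE]
    refine ⟨?_, fun w hw => by rw [this]; exact hφP w hw⟩
    rw [hl] at hyF; exact hyF.1
  · intro y hy
    rw [argmax_hull S φ E hE] at hy
    refine convexHull_min ?_ hK.convex hy
    intro s hs
    obtain ⟨hs1, hs2⟩ := Finset.mem_filter.1 (Finset.mem_coe.1 hs)
    rw [hE] at hs2
    exact (hφS s hs1).2 (le_antisymm (hφS s hs1).1 (hs2.2 k hkP))

theorem IsFace.of_subset {P F G : Set V} (hF : IsFace P F) (hG : IsFace P G) (h : F ⊆ G) :
    IsFace G F := by
  rcases hF with rfl | rfl | ⟨l, hl⟩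
  · exact Or.inl (subset_antisymm h hG.subset)
  · exact Or.inr (Or.inl rfl)
  · by_cases hFe : F = ∅
    · exact Or.inr (Or.inl hFe)
    obtain ⟨k, hk⟩ := Set.nonempty_iff_ne_empty.2 hFe
    refine Or.inr (Or.inr ⟨l, ?_⟩)
    apply subset_antisymm
    · intro x hx
      refine ⟨h hx, fun y hy => ?_⟩
      rw [hl] at hx
      exact hx.2 y (hG.subset hy)
    · rintro x ⟨hx1, hx2⟩
      have := hx2 k (h hk)
      rw [hl] at hk ⊢
      exact ⟨hG.subset hx1, fun y hy => (hk.2 y hy).trans this⟩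

/-- relative interior -/
def rint (G : Set V) : Set V := {x | x ∈ G ∧ ∀ y ∈ G, ∃ ε : ℝ, 0 < ε ∧ x + ε • (x - y) ∈ G}

theorem rint_subset (G : Set V) : rint G ⊆ G := fun _ h => h.1

theorem rint_nonempty {G : Set V} (hG : IsPolytope G) (hne : G ≠ ∅) : (rint G).Nonempty := by
  obtain ⟨S, rfl⟩ := hG
  have hS : S.Nonempty := by
    rw [Finset.nonempty_iff_ne_empty]; rintro rfl; simp at hne
  have hn : (0 : ℝ) < S.card := by exact_mod_cast hS.card_pos
  set n : ℝ := (S.card : ℝ) with hnd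
  set z : V := ∑ s ∈ S, (1 / n) • s with hz
  have hzG : z ∈ convexHull ℝ (S : Set V) := by
    rw [Finset.mem_convexHull']
    refine ⟨fun _ => 1 / n, fun _ _ => by positivity, ?_, rfl⟩
    simp [← hnd, hn.ne']
  have hsub : convexHull ℝ (S : Set V) ⊆ {y | z + (1 / n) • (z - y) ∈ convexHull ℝ (S : Set V)} := by
    apply convexHull_min
    · intro s0 hs0
      show z + (1 / n) • (z - s0) ∈ convexHull ℝ (S : Set V)
      rw [Finset.mem_convexHull']
      refine ⟨fun s => (1 + 1 / n) * (1 / n) - (if s = s0 then 1 / n else 0), ?_, ?_, ?_⟩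
      · intro s hs
        have : 0 < 1 / n := by positivity
        beta_reduce
        split_ifs <;> nlinarith
      · rw [Finset.sum_sub_distrib, Finset.sum_ite_eq', if_pos (Finset.mem_coe.1 hs0)]
        rw [Finset.sum_const, nsmul_eq_mul, ← hnd]; field_simp; ring
      · simp only [sub_smul, Finset.sum_sub_distrib, ite_smul, zero_smul, Finset.sum_ite_eq']
        rw [if_pos (Finset.mem_coe.1 hs0)]
        simp only [mul_smul, ← Finset.smul_sum]
        simp only [hz, ← Finset.smul_sum]
        module
    · intro x hx y hy a b ha hb hab
      rw [Set.mem_ofPred_eq] at hx hy ⊢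
      have := convex_convexHull ℝ (S : Set V) hx hy ha hb hab
      convert this using 1
      have hb' : b = 1 - a := by linarith
      subst hb'
      module
  exact ⟨z, hzG, fun y hy => ⟨1 / n, by positivity, hsub hy⟩⟩

theorem rint_combo {G : Set V} (hG : Convex ℝ G) {x y : V} (hx : x ∈ G) (hy : y ∈ rint G) {a b : ℝ}
    (ha : 0 ≤ a) (hb : 0 < b) (hab : a + b = 1) : a • x + b • y ∈ rint G := by
  refine ⟨hG hx hy.1 ha hb.le hab, fun w hw => ?_⟩
  obtain ⟨ε, hε, h⟩ := hy.2 w hw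
  have hb1 : b ≤ 1 := by linarith
  have hD : 0 < 1 + ε - b * ε := by nlinarith
  refine ⟨b * ε / (1 + ε - b * ε), by positivity, ?_⟩
  have := cvx_mem hG hx h (a := a * (1 + ε) / (1 + ε - b * ε)) (b := b / (1 + ε - b * ε))
    (by positivity) (by positivity) (by
      have : a = 1 - b := by linarith
      subst this
      field_simp; ring)
  convert this using 1
  have : a = 1 - b := by linarith
  subst this
  match_scalars <;> field_simp <;> ring

theorem rint_RO {G : Set V} (hG : Convex ℝ G) : RO (rint G) := by
  constructor
  · intro x hx y hy a b ha hb hab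
    rcases hb.eq_or_lt with rfl | hb'
    · have : a = 1 := by linarith
      subst this; simpa using hx
    · exact rint_combo hG hx.1 hy ha hb' hab
  · intro x hx y hy
    obtain ⟨ε, hε, h⟩ := hx.2 y hy.1
    refine ⟨ε / 2, by linarith, ?_⟩
    have := rint_combo hG h hx (a := 1 / 2) (b := 1 / 2) (by norm_num) (by norm_num) (by norm_num)
    convert this using 1
    module

theorem vectorSpan_rint {G : Set V} (hG : Convex ℝ G) (hne : (rint G).Nonempty) :
    vectorSpan ℝ (rint G) = vectorSpan ℝ G := by
  refine le_antisymm (vectorSpan_mono ℝ (rint_subset G)) ?_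
  obtain ⟨z, hz⟩ := hne
  rw [vectorSpan_eq_span_vsub_set_right ℝ hz.1, Submodule.span_le]
  rintro _ ⟨x, hx, rfl⟩
  have := rint_combo hG hx hz (a := 1 / 2) (b := 1 / 2) (by norm_num) (by norm_num) (by norm_num)
  have := Submodule.smul_mem _ (2 : ℝ) (vsub_mem_vectorSpan ℝ this hz)
  simp only [vsub_eq_sub, SetLike.mem_coe] at this ⊢
  convert this using 1
  module

theorem rint_nhd {G : Set V} (hG : Convex ℝ G) {z : V} (hz : z ∈ rint G) {v : V}
    (hv : v ∈ vectorSpan ℝ G) : ∃ ε : ℝ, 0 < ε ∧ ∀ s : ℝ, |s| ≤ ε → z + s • v ∈ G := by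
  rw [← vectorSpan_rint hG ⟨z, hz⟩] at hv
  obtain ⟨ε, hε, h⟩ := (rint_RO hG).nhd hz hv
  exact ⟨ε, hε, fun s hs => rint_subset _ (h s hs)⟩

theorem support {G : Set V} (hG : Convex ℝ G) {z p : V} (hz : z ∈ rint G) (hp : p ∈ G)
    (hp' : p ∉ rint G) : ∃ l : V →ₗ[ℝ] ℝ, (∀ y ∈ G, l y ≤ l p) ∧ l z < l p := by
  let L := vectorSpan ℝ G
  let T : PointedCone ℝ L :=
    { carrier := {v | ∃ ε : ℝ, 0 < ε ∧ p + ε • (v : V) ∈ G}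
      add_mem' := by
        rintro v w ⟨ε, hε, h⟩ ⟨δ, hδ, h'⟩
        refine ⟨ε * δ / (ε + δ), by positivity, ?_⟩
        have := cvx_mem hG h h' (a := δ / (ε + δ)) (b := ε / (ε + δ)) (by positivity) (by positivity)
          (by field_simp; ring)
        convert this using 1
        simp only [Submodule.coe_add]
        match_scalars <;> field_simp <;> ring
      zero_mem' := ⟨1, one_pos, by simpa using hp⟩
      smul_mem' := by
        rintro ⟨c, hc⟩ v ⟨ε, hε, h⟩
        rcases hc.eq_or_lt with rfl | hc'
        · refine ⟨1, one_pos, ?_⟩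
          have : ((⟨0, hc⟩ : {c : ℝ // 0 ≤ c}) • v) = 0 := zero_smul ℝ v
          rw [this]; simpa using hp
        · refine ⟨ε / c, by positivity, ?_⟩
          have : ((⟨c, hc⟩ : {c : ℝ // 0 ≤ c}) • v) = c • v := rfl
          rw [this, Submodule.coe_smul, smul_smul, div_mul_cancel₀ _ hc'.ne']
          exact h }
  have hT : ∀ v : L, v ∈ T ↔ ∃ ε : ℝ, 0 < ε ∧ p + ε • (v : V) ∈ G := fun v => Iff.rfl
  let u : L := ⟨z - p, vsub_mem_vectorSpan ℝ hz.1 hp⟩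
  have hu : u ≠ 0 := by
    intro h
    have : z - p = 0 := congrArg Subtype.val h
    rw [sub_eq_zero] at this
    exact hp' (this ▸ hz)
  have hval : ∀ (c : ℝ) (hx : c • u ∈ (LinearPMap.mkSpanSingleton u (1 : ℝ) hu : L →ₗ.[ℝ] ℝ).domain),
      (LinearPMap.mkSpanSingleton u (1 : ℝ) hu : L →ₗ.[ℝ] ℝ) ⟨c • u, hx⟩ = c := by
    intro c hx
    exact (LinearPMap.mkSpanSingleton'_apply u (1 : ℝ) _ c hx).trans (by simp)
  obtain ⟨g, hg1, hg2⟩ := riesz_extension T (LinearPMap.mkSpanSingleton u (1 : ℝ) hu) (by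
      rintro ⟨x, hx⟩ hxT
      obtain ⟨c, rfl⟩ := Submodule.mem_span_singleton.1 hx
      rw [hval c hx]
      by_contra hc
      push Not at hc
      apply hp'
      obtain ⟨ε, hε, h⟩ := (hT _).1 hxT
      have hd : 0 < -(ε * c) := by nlinarith
      have := rint_combo hG h hz (a := 1 / (1 + -(ε * c))) (b := -(ε * c) / (1 + -(ε * c)))
        (by positivity) (by positivity) (by field_simp)
      convert this using 1
      have e : ((c • u : L) : V) = c • (z - p) := rfl
      simp only [e]
      have : 1 + -(ε * c) ≠ 0 := by positivity
      match_scalars <;> field_simp <;> ring) (by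
      intro y
      obtain ⟨ε, hε, h⟩ := rint_nhd hG hz y.2
      refine ⟨⟨(1 / ε) • u, Submodule.mem_span_singleton.2 ⟨_, rfl⟩⟩, ?_⟩
      rw [hT]
      refine ⟨ε, hε, ?_⟩
      have := h ε (abs_of_pos hε).le
      convert this using 1
      have e : (((1 / ε) • u + y : L) : V) = (1 / ε) • (z - p) + (y : V) := rfl
      simp only [e]
      match_scalars <;> field_simp <;> ring)
  have hgu : g u = 1 := by
    have h1 := hg1 ⟨(1 : ℝ) • u, Submodule.mem_span_singleton.2 ⟨1, rfl⟩⟩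
    have h2 : g ((1 : ℝ) • u) = 1 := h1.trans (hval 1 _)
    rw [one_smul] at h2
    exact h2
  obtain ⟨l, hl⟩ := LinearMap.exists_extend g
  have hl' : ∀ v : L, l v = g v := fun v => by rw [← hl]; rfl
  refine ⟨-l, ?_, ?_⟩
  · intro y hy
    have h1 : (⟨y - p, vsub_mem_vectorSpan ℝ hy hp⟩ : L) ∈ T :=
      (hT _).2 ⟨1, one_pos, by simpa using hy⟩
    have h2 := hg2 _ h1
    rw [← hl'] at h2
    simp only [map_sub] at h2
    simp only [LinearMap.neg_apply]; linarith
  · rw [← hl'] at hgu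
    simp only [u, map_sub] at hgu
    simp only [LinearMap.neg_apply]; linarith

theorem face_finrank {G H : Set V} (hG : IsPolytope G) (h : IsFace G H) (hne : H ≠ ∅)
    (hHG : H ≠ G) : Module.finrank ℝ (vectorSpan ℝ H) < Module.finrank ℝ (vectorSpan ℝ G) := by
  have := hG.fd
  rcases h with rfl | rfl | ⟨l, hl⟩
  · exact (hHG rfl).elim
  · exact (hne rfl).elim
  have hsub : H ⊆ G := by rw [hl]; exact fun x hx => hx.1
  obtain ⟨y, hy, hyH⟩ : ∃ y ∈ G, y ∉ H := by
    by_contra hc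
    push Not at hc
    exact hHG (subset_antisymm hsub hc)
  obtain ⟨k, hk⟩ := Set.nonempty_iff_ne_empty.2 hne
  have hcst : ∀ a ∈ H, ∀ b ∈ H, l a = l b := by
    intro a ha b hb
    rw [hl] at ha hb
    exact le_antisymm (hb.2 a ha.1) (ha.2 b hb.1)
  have hle : vectorSpan ℝ H ≤ vectorSpan ℝ G ⊓ LinearMap.ker l := by
    refine le_inf (vectorSpan_mono ℝ hsub) ?_
    rw [vectorSpan, Submodule.span_le]
    rintro _ ⟨a, ha, b, hb, rfl⟩
    simp [hcst a ha b hb]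
  have h1 := finrank_inf_ker (vectorSpan ℝ G) l (by
    refine ⟨y - k, vsub_mem_vectorSpan ℝ hy (hsub hk), ?_⟩
    intro h0
    apply hyH
    rw [hl] at hk ⊢
    rw [map_sub, sub_eq_zero] at h0
    exact ⟨hy, fun w hw => by rw [h0]; exact hk.2 w hw⟩)
  have : FiniteDimensional ℝ (vectorSpan ℝ G ⊓ LinearMap.ker l : Submodule ℝ V) :=
    Submodule.finiteDimensional_of_le inf_le_left
  have h2 := Submodule.finrank_mono hle
  omega

theorem exists_face_rint {G : Set V} (hG : IsPolytope G) {p : V} (hp : p ∈ G) :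
    ∃ H, IsFace G H ∧ p ∈ rint H := by
  induction hn : Module.finrank ℝ (vectorSpan ℝ G) using Nat.strong_induction_on generalizing G with
  | _ n ih =>
  by_cases hpr : p ∈ rint G
  · exact ⟨G, Or.inl rfl, hpr⟩
  obtain ⟨z, hz⟩ := rint_nonempty hG (Set.nonempty_iff_ne_empty.1 ⟨p, hp⟩)
  obtain ⟨l, hl1, hl2⟩ := support hG.convex hz hp hpr
  have hF : IsFace G {x | x ∈ G ∧ ∀ y ∈ G, l y ≤ l x} := Or.inr (Or.inr ⟨l, rfl⟩)
  have hpF : p ∈ {x | x ∈ G ∧ ∀ y ∈ G, l y ≤ l x} := ⟨hp, hl1⟩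
  have hd := face_finrank hG hF (Set.nonempty_iff_ne_empty.1 ⟨p, hpF⟩) (by
    intro h
    have : z ∈ {x | x ∈ G ∧ ∀ y ∈ G, l y ≤ l x} := by rw [h]; exact hz.1
    exact hl2.not_ge (this.2 p hp))
  obtain ⟨H, hH, hpH⟩ := ih _ (hn ▸ hd) (hG.face hF) hpF rfl
  exact ⟨H, hF.trans hG hH, hpH⟩

theorem rint_face_subset {G H K : Set V} (hK : IsFace G K) (hH : H ⊆ G) {p : V} (hp : p ∈ rint H)
    (hpK : p ∈ K) : H ⊆ K := by
  rcases hK with rfl | rfl | ⟨l, hl⟩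
  · exact hH
  · exact hpK.elim
  · intro y hy
    obtain ⟨ε, hε, h⟩ := hp.2 y hy
    rw [hl] at hpK ⊢
    have h1 := hpK.2 _ (hH h)
    simp only [map_add, map_smul, map_sub, smul_eq_mul] at h1
    have : l p ≤ l y := by nlinarith
    exact ⟨hH hy, fun w hw => (hpK.2 w hw).trans this⟩

theorem face_functional {G K : Set V} (hK : IsFace G K) (hKe : K ≠ ∅) (hKG : K ≠ G) {z : V}
    (hz : z ∈ rint G) : ∃ m : V →ₗ[ℝ] ℝ, ∀ x ∈ G, m (x - z) ≤ 1 ∧ (m (x - z) = 1 ↔ x ∈ K) := by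
  have hzK : z ∉ K := fun h => hKG (subset_antisymm hK.subset (rint_face_subset hK subset_rfl hz h))
  rcases hK with rfl | rfl | ⟨l, hl⟩
  · exact (hKG rfl).elim
  · exact (hKe rfl).elim
  obtain ⟨k, hk⟩ := Set.nonempty_iff_ne_empty.2 hKe
  have hk' := hk
  rw [hl] at hk'
  have hlt : l z < l k := by
    refine lt_of_not_ge fun h => hzK ?_
    rw [hl]; exact ⟨hz.1, fun w hw => (hk'.2 w hw).trans h⟩
  have hd : 0 < l k - l z := by linarith
  refine ⟨(l k - l z)⁻¹ • l, fun x hx => ?_⟩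
  simp only [LinearMap.smul_apply, smul_eq_mul]
  rw [l.map_sub, inv_mul_le_iff₀ hd, inv_mul_eq_iff_eq_mul₀ hd.ne', mul_one]
  have h1 := hk'.2 x hx
  refine ⟨by linarith, fun h => ?_, fun h => ?_⟩
  · rw [hl]; exact ⟨hx, fun w hw => by have := hk'.2 w hw; linarith⟩
  · rw [hl] at h
    have := h.2 k hk'.1
    linarith

theorem closed_line {G : Set V} (hG : IsPolytope G) (z v : V) : IsClosed {t : ℝ | z + t • v ∈ G} := by
  obtain ⟨S, rfl⟩ := hG
  let W := Submodule.span ℝ ((insert z (insert v S) : Finset V) : Set V)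
  have hW : FiniteDimensional ℝ W := FiniteDimensional.span_finset ℝ _
  have hsub : ∀ x ∈ insert z (insert v S), x ∈ W := fun x hx => Submodule.subset_span (by exact_mod_cast hx)
  have hSW : convexHull ℝ (S : Set V) ⊆ W :=
    convexHull_min (fun s hs => hsub s (by simp [Finset.mem_coe.1 hs])) W.convex
  obtain ⟨φ, hφ⟩ := LinearMap.exists_extend (Module.finBasis ℝ W).equivFun.toLinearMap
  have hφ' : ∀ w : W, φ w = (Module.finBasis ℝ W).equivFun w := fun w => by
    have := LinearMap.congr_fun hφ w
    simpa using this
  have hinj : ∀ a ∈ W, ∀ b ∈ W, φ a = φ b → a = b := by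
    intro a ha b hb h
    rw [hφ' ⟨a, ha⟩, hφ' ⟨b, hb⟩] at h
    exact congrArg Subtype.val ((Module.finBasis ℝ W).equivFun.injective h)
  have hcl : IsClosed (convexHull ℝ (φ '' (S : Set V))) :=
    (S.finite_toSet.image φ).isClosed_convexHull ℝ
  have : {t : ℝ | z + t • v ∈ convexHull ℝ (S : Set V)} =
      (fun t : ℝ => φ z + t • φ v) ⁻¹' (convexHull ℝ (φ '' (S : Set V))) := by
    ext t
    rw [Set.mem_preimage, ← LinearMap.image_convexHull]
    constructor
    · intro h
      exact ⟨_, h, by simp⟩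
    · rintro ⟨w, hw, h⟩
      have : w = z + t • v := by
        apply hinj _ (hSW hw) _ (W.add_mem (hsub z (by simp)) (W.smul_mem _ (hsub v (by simp))))
        simpa using h
      show z + t • v ∈ convexHull ℝ (S : Set V)
      rw [← this]; exact hw
  rw [this]
  exact hcl.preimage (by fun_prop)

theorem bounded_line {G : Set V} (hG : IsPolytope G) (z v : V) (h : ∀ t : ℝ, 0 ≤ t → z + t • v ∈ G) :
    v = 0 := by
  rw [← Module.forall_dual_apply_eq_zero_iff ℝ v]
  obtain ⟨S, rfl⟩ := hG
  have key : ∀ f : V →ₗ[ℝ] ℝ, f v ≤ 0 := by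
    intro f
    obtain ⟨M, hM⟩ := Finset.exists_le (S.image f)
    have hG : convexHull ℝ (S : Set V) ⊆ {y | f y ≤ M} :=
      convexHull_min (fun s hs => hM _ (Finset.mem_image_of_mem _ hs)) (convex_halfSpace_le f.isLinear _)
    by_contra hc
    push Not at hc
    have h0 := hG (h ((|M - f z| + 1) / f v) (by positivity))
    simp only [Set.mem_ofPred_eq, map_add, map_smul, smul_eq_mul, div_mul_cancel₀ _ hc.ne'] at h0
    linarith [le_abs_self (M - f z)]
  intro f
  have h1 := key f
  have h2 := key (-f)
  simp only [LinearMap.neg_apply] at h2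
  linarith

theorem hrep {G : Set V} (hG : IsPolytope G) {z : V} (hz : z ∈ rint G) (m : Set V → V →ₗ[ℝ] ℝ)
    (hm : ∀ K, IsFace G K → K ≠ ∅ → K ≠ G → ∀ x ∈ G, m K (x - z) ≤ 1 ∧ (m K (x - z) = 1 ↔ x ∈ K))
    {v : V} (hv : v ∈ vectorSpan ℝ G) (h : ∀ K, IsFace G K → K ≠ ∅ → K ≠ G → m K v ≤ 1) :
    z + v ∈ G := by
  have hcomp : IsCompact (Set.Icc (0 : ℝ) 1 ∩ {t : ℝ | z + t • v ∈ G}) :=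
    isCompact_Icc.inter_right (closed_line hG z v)
  obtain ⟨t, ⟨ht, htG⟩, hmax⟩ := hcomp.exists_isMaxOn ⟨0, by simp, by simpa using hz.1⟩
    continuousOn_id
  have htG' : z + t • v ∈ G := htG
  rcases ht.2.eq_or_lt with h1 | h1
  · rw [h1, one_smul] at htG'; exact htG'
  exfalso
  obtain ⟨H, hH, hq⟩ := exists_face_rint hG htG'
  by_cases hHG : H = G
  · subst hHG
    obtain ⟨ε, hε, hn⟩ := rint_nhd hG.convex hq hv
    have hd : 0 < min ε (1 - t) := lt_min hε (by linarith)
    have h2 := hn (min ε (1 - t)) (by rw [abs_of_pos hd]; exact min_le_left _ _)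
    rw [add_assoc, ← add_smul] at h2
    have h3 : t + min ε (1 - t) ≤ t :=
      hmax (a := t + min ε (1 - t)) ⟨⟨by linarith [ht.1], by linarith [min_le_right ε (1 - t)]⟩, h2⟩
    linarith
  · have hHe : H ≠ ∅ := Set.nonempty_iff_ne_empty.1 ⟨_, hq.1⟩
    have h2 := ((hm H hH hHe hHG _ htG').2).2 hq.1
    have h3 := h H hH hHe hHG
    simp only [add_sub_cancel_left, map_smul, smul_eq_mul] at h2
    nlinarith [ht.1]

end Geo2

section Euler

variable {V : Type*} [AddCommGroup V] [Module ℝ V]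

theorem RO_all {κ : Type*} (Q : κ → Set V) (hQ : ∀ i C, RO C → RO (C ∩ Q i)) (s : Finset κ)
    {C : Set V} (hC : RO C) : RO (C ∩ {v | ∀ i ∈ s, v ∈ Q i}) := by
  induction s using Finset.induction_on with
  | empty => simpa using hC
  | insert a s ha ih =>
    have := hQ a _ ih
    convert this using 1
    ext v
    simp only [Set.mem_inter_iff, Set.mem_ofPred_eq, Finset.mem_insert, forall_eq_or_imp]
    tauto

theorem face_mid {G H : Set V} (hH : IsFace G H) {a w : V} (ha : a ∈ G) {ε : ℝ}
    (hb : a + (2 * ε) • w ∈ G) (hx : a + ε • w ∈ H) : a ∈ H := by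
  rcases hH with rfl | rfl | ⟨l, hl⟩
  · exact ha
  · exact hx.elim
  · rw [hl] at hx ⊢
    obtain ⟨h1, h2⟩ := hx
    have h3 := h2 _ ha
    have h4 := h2 _ hb
    simp only [map_add, map_smul, smul_eq_mul] at h3 h4
    refine ⟨ha, fun y hy => ?_⟩
    have h5 := h2 y hy
    simp only [map_add, map_smul, smul_eq_mul] at h5
    nlinarith

theorem face_cover {G F : Set V} (hG : IsPolytope G) {z : V} (hz : z ∈ rint G)
    (m : Set V → V →ₗ[ℝ] ℝ) (hm0 : m ∅ = 0)
    (hm : ∀ K, IsFace G K → K ≠ ∅ → K ≠ G → ∀ x ∈ G, m K (x - z) ≤ 1 ∧ (m K (x - z) = 1 ↔ x ∈ K))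
    (hF : IsFace G F) (hFG : F ≠ G) {v : V} (hv : v ∈ vectorSpan ℝ G) :
    ∃ H, IsFace G H ∧ F ⊆ H ∧ H ≠ G ∧ v ∈ Submodule.span ℝ ((fun x => x - z) '' H) ∧
      ∃ μ, ∀ K, IsFace G K → F ⊆ K → K ≠ G → m K v ≤ μ ∧ (m K v = μ ↔ H ⊆ K) := by
  have hfin : {K | IsFace G K ∧ F ⊆ K ∧ K ≠ G}.Finite :=
    hG.finite_faces.subset (fun K hK => hK.1)
  obtain ⟨K0, hK0, hmax⟩ := Set.exists_max_image _ (fun K => m K v) hfin ⟨F, hF, subset_rfl, hFG⟩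
  obtain ⟨hK0f, hFK0, hK0G⟩ := hK0
  obtain ⟨μ, hμ⟩ : ∃ μ, μ = m K0 v := ⟨_, rfl⟩
  have hle : ∀ K, IsFace G K → F ⊆ K → K ≠ G → m K v ≤ μ := fun K h1 h2 h3 => by
    rw [hμ]; exact hmax K ⟨h1, h2, h3⟩
  by_cases hFe : F = ∅
  · subst hFe
    have hμ0 : 0 ≤ μ := by
      have := hle ∅ hF subset_rfl hFG
      simpa [hm0] using this
    rcases hμ0.eq_or_lt with h0 | hpos
    · have hv0 : v = 0 := by
        refine bounded_line hG z v fun t ht => hrep hG hz m hm (Submodule.smul_mem _ _ hv) ?_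
        intro K h1 h2 h3
        have := hle K h1 (Set.empty_subset _) h3
        simp only [map_smul, smul_eq_mul]
        nlinarith
      subst hv0
      refine ⟨∅, hF, subset_rfl, hFG, Submodule.zero_mem _, 0, fun K _ _ _ => by simp⟩
    · have hxG : z + μ⁻¹ • v ∈ G := by
        refine hrep hG hz m hm (Submodule.smul_mem _ _ hv) ?_
        intro K h1 h2 h3
        have := hle K h1 (Set.empty_subset _) h3
        simp only [map_smul, smul_eq_mul]
        rw [inv_mul_le_iff₀ hpos]; linarith
      obtain ⟨H, hH, hx⟩ := exists_face_rint hG hxG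
      have key : ∀ K, IsFace G K → K ≠ G → (m K v = μ ↔ H ⊆ K) := by
        intro K h1 h3
        by_cases hKe : K = ∅
        · subst hKe
          simp only [hm0, LinearMap.zero_apply, hpos.ne, false_iff]
          exact fun h => h hx.1
        have h4 := (hm K h1 hKe h3 _ hxG).2
        simp only [add_sub_cancel_left, map_smul, smul_eq_mul] at h4
        rw [inv_mul_eq_iff_eq_mul₀ hpos.ne', mul_one] at h4
        rw [h4]
        exact ⟨fun h => rint_face_subset h1 hH.subset hx h, fun h => h hx.1⟩
      refine ⟨H, hH, Set.empty_subset _, ?_, ?_, μ, fun K h1 h2 h3 => ⟨hle K h1 h2 h3, key K h1 h3⟩⟩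
      · rintro rfl
        exact hK0G (subset_antisymm hK0f.subset ((key K0 hK0f hK0G).1 hμ.symm))
      · have h5 : z + μ⁻¹ • v - z ∈ Submodule.span ℝ ((fun x => x - z) '' H) :=
          Submodule.subset_span ⟨_, hx.1, rfl⟩
        have := Submodule.smul_mem _ μ h5
        rwa [add_sub_cancel_left, smul_smul, mul_inv_cancel₀ hpos.ne', one_smul] at this
  · have hne : ∀ K, F ⊆ K → K ≠ ∅ := by
      rintro K h rfl
      exact hFe (Set.subset_empty_iff.1 h)
    obtain ⟨p, hp⟩ := rint_nonempty (hG.face hF) hFe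
    have hpG : p ∈ G := hF.subset hp.1
    obtain ⟨w, hw⟩ : ∃ w, w = v - μ • (p - z) := ⟨_, rfl⟩
    have hpz : p - z ∈ vectorSpan ℝ G := vsub_mem_vectorSpan ℝ hpG hz.1
    have hwL : w ∈ vectorSpan ℝ G := by
      rw [hw]; exact Submodule.sub_mem _ hv (Submodule.smul_mem _ _ hpz)
    have hmp : ∀ K, IsFace G K → F ⊆ K → K ≠ G → m K (p - z) = 1 := fun K h1 h2 h3 =>
      (hm K h1 (hne K h2) h3 p hpG).2.2 (h2 hp.1)
    have hmw : ∀ K, IsFace G K → F ⊆ K → K ≠ G → m K w = m K v - μ := fun K h1 h2 h3 => by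
      rw [hw, map_sub, map_smul, hmp K h1 h2 h3]; simp
    obtain ⟨M, hM⟩ := (hG.finite_faces.image (fun K => m K w / (1 - m K (p - z)))).bddAbove
    have hM1 : 0 < max M 1 := lt_of_lt_of_le one_pos (le_max_right _ _)
    obtain ⟨ε, hε⟩ : ∃ ε, ε = 1 / (2 * max M 1) := ⟨_, rfl⟩
    have hε0 : 0 < ε := by rw [hε]; positivity
    have hεM : 2 * ε * max M 1 = 1 := by rw [hε]; field_simp
    have hb : p + (2 * ε) • w ∈ G := by
      have : p + (2 * ε) • w = z + ((p - z) + (2 * ε) • w) := by module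
      rw [this]
      refine hrep hG hz m hm (Submodule.add_mem _ hpz (Submodule.smul_mem _ _ hwL)) ?_
      intro K h1 h2 h3
      simp only [map_add, map_smul, smul_eq_mul]
      by_cases hpK : p ∈ K
      · have h4 := rint_face_subset h1 hF.subset hp hpK
        rw [hmp K h1 h4 h3, hmw K h1 h4 h3]
        have := hle K h1 h4 h3
        nlinarith
      · have h4 := hm K h1 h2 h3 p hpG
        have h5 : m K (p - z) < 1 := lt_of_le_of_ne h4.1 (fun h => hpK (h4.2.1 h))
        have h6 := hM (Set.mem_image_of_mem _ (show K ∈ {F | IsFace G F} from h1))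
        rw [div_le_iff₀ (by linarith)] at h6
        have h7 : m K w ≤ max M 1 * (1 - m K (p - z)) :=
          h6.trans (mul_le_mul_of_nonneg_right (le_max_left _ _) (by linarith))
        have h8 := mul_le_mul_of_nonneg_left h7 (show 0 ≤ 2 * ε by linarith)
        rw [← mul_assoc, hεM] at h8
        linarith
    have hxG : p + ε • w ∈ G := by
      have := cvx_mem hG.convex hpG hb (a := 1 / 2) (b := 1 / 2) (by norm_num) (by norm_num)
        (by norm_num)
      convert this using 1
      module
    obtain ⟨H, hH, hx⟩ := exists_face_rint hG hxG
    have hpH : p ∈ H := face_mid hH hpG hb hx.1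
    have hFH : F ⊆ H := rint_face_subset hH hF.subset hp hpH
    have key : ∀ K, IsFace G K → F ⊆ K → K ≠ G → (m K v = μ ↔ H ⊆ K) := by
      intro K h1 h2 h3
      have h4 := (hm K h1 (hne K h2) h3 _ hxG).2
      have h5 : p + ε • w - z = (p - z) + ε • w := by module
      rw [h5, map_add, map_smul, hmp K h1 h2 h3, hmw K h1 h2 h3, smul_eq_mul] at h4
      have h6 : m K v = μ ↔ 1 + ε * (m K v - μ) = 1 := by
        constructor
        · intro h; rw [h]; ring
        · intro h
          have : ε * (m K v - μ) = 0 := by linarith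
          rcases mul_eq_zero.1 this with h | h
          · exact (hε0.ne' h).elim
          · linarith
      rw [h6, h4]
      exact ⟨fun h => rint_face_subset h1 hH.subset hx h, fun h => h hx.1⟩
    refine ⟨H, hH, hFH, ?_, ?_, μ, fun K h1 h2 h3 => ⟨hle K h1 h2 h3, key K h1 h2 h3⟩⟩
    · rintro rfl
      exact hK0G (subset_antisymm hK0f.subset ((key K0 hK0f hFK0 hK0G).1 hμ.symm))
    · have h5 : p + ε • w - z ∈ Submodule.span ℝ ((fun x => x - z) '' H) :=
        Submodule.subset_span ⟨_, hx.1, rfl⟩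
      have h6 : p - z ∈ Submodule.span ℝ ((fun x => x - z) '' H) :=
        Submodule.subset_span ⟨_, hpH, rfl⟩
      have h7 := Submodule.add_mem _ (Submodule.smul_mem _ ε⁻¹ (Submodule.sub_mem _ h5 h6))
        (Submodule.smul_mem _ μ h6)
      convert h7 using 1
      rw [hw]
      match_scalars <;> field_simp <;> ring

theorem vectorSpan_of_zero {S : Set V} (h : (0 : V) ∈ S) : vectorSpan ℝ S = Submodule.span ℝ S := by
  rw [vectorSpan_eq_span_vsub_set_right ℝ h]
  simp

theorem RO_submodule (L : Submodule ℝ V) : RO (L : Set V) :=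
  ⟨L.convex, fun _ hx _ hy => ⟨1, one_pos,
    L.add_mem hx (L.smul_mem _ (L.sub_mem hx hy))⟩⟩

theorem finrank_cone {G H : Set V} (hG : IsPolytope G) {z : V} (hz : z ∈ rint G) (hH : IsFace G H)
    (hHe : H ≠ ∅) (m : V →ₗ[ℝ] ℝ) (hm : ∀ x ∈ H, m (x - z) = 1) :
    Module.finrank ℝ (Submodule.span ℝ ((fun x => x - z) '' H)) =
      Module.finrank ℝ (vectorSpan ℝ H) + 1 := by
  obtain ⟨y, hy⟩ := Set.nonempty_iff_ne_empty.2 hHe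
  have hfd := hG.fd
  have hle : Submodule.span ℝ ((fun x => x - z) '' H) ≤ vectorSpan ℝ G := by
    rw [Submodule.span_le]
    rintro _ ⟨x, hx, rfl⟩
    exact vsub_mem_vectorSpan ℝ (hH.subset hx) hz.1
  have : FiniteDimensional ℝ (Submodule.span ℝ ((fun x => x - z) '' H)) :=
    Submodule.finiteDimensional_of_le hle
  have hyD : y - z ∈ Submodule.span ℝ ((fun x => x - z) '' H) := Submodule.subset_span ⟨y, hy, rfl⟩
  rw [← finrank_inf_ker _ m ⟨y - z, hyD, by rw [hm y hy]; exact one_ne_zero⟩]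
  have : Submodule.span ℝ ((fun x => x - z) '' H) ⊓ LinearMap.ker m = vectorSpan ℝ H := by
    apply le_antisymm
    · rintro d ⟨hd, hk⟩
      have hgen : ∀ d ∈ Submodule.span ℝ ((fun x => x - z) '' H),
          d - m d • (y - z) ∈ vectorSpan ℝ H := by
        intro d hd
        induction hd using Submodule.span_induction with
        | mem x hx =>
          obtain ⟨x, hx, rfl⟩ := hx
          beta_reduce
          rw [hm x hx, one_smul, sub_sub_sub_cancel_right]
          exact vsub_mem_vectorSpan ℝ hx hy
        | zero => simp
        | add a b _ _ ha hb =>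
          have := Submodule.add_mem _ ha hb
          convert this using 1
          rw [map_add]; module
        | smul c a _ ha =>
          have := Submodule.smul_mem _ c ha
          convert this using 1
          rw [map_smul, smul_eq_mul]; module
      have := hgen d hd
      rw [LinearMap.mem_ker.1 hk] at this
      simpa using this
    · rw [vectorSpan, Submodule.span_le]
      rintro _ ⟨a, ha, b, hb, rfl⟩
      have e : a -ᵥ b = (a - z) - (b - z) := by simp
      refine ⟨?_, ?_⟩
      · beta_reduce
        rw [e]
        exact Submodule.sub_mem _ (Submodule.subset_span ⟨a, ha, rfl⟩)
          (Submodule.subset_span ⟨b, hb, rfl⟩)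
      · beta_reduce
        rw [e]
        simp [-sub_sub_sub_cancel_right, map_sub m (a - z) (b - z), hm a ha, hm b hb]
  rw [this]

theorem euler_faces {G F : Set V} (hG : IsPolytope G) (hF : IsFace G F) (hFG : F ≠ G)
    [Fintype {H : Set V // IsFace G H ∧ F ⊆ H ∧ H ≠ G}] :
    ∑ H : {H : Set V // IsFace G H ∧ F ⊆ H ∧ H ≠ G}, (-1 : ℤ) ^ (pdim H.1 + 1).toNat =
      (-1) ^ (pdim G).toNat := by
  have hGe : G ≠ ∅ := by
    rintro rfl
    exact hFG (Set.subset_empty_iff.1 hF.subset)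
  obtain ⟨z, hz⟩ := rint_nonempty hG hGe
  have hfd := hG.fd
  have hch : ∀ K : Set V, ∃ m : V →ₗ[ℝ] ℝ, (K = ∅ → m = 0) ∧ (IsFace G K → K ≠ ∅ → K ≠ G →
      ∀ x ∈ G, m (x - z) ≤ 1 ∧ (m (x - z) = 1 ↔ x ∈ K)) := by
    intro K
    by_cases h : IsFace G K ∧ K ≠ ∅ ∧ K ≠ G
    · obtain ⟨m, hm⟩ := face_functional h.1 h.2.1 h.2.2 hz
      exact ⟨m, fun h' => (h.2.1 h').elim, fun _ _ _ => hm⟩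
    · exact ⟨0, fun _ => rfl, fun h1 h2 h3 => (h ⟨h1, h2, h3⟩).elim⟩
  choose m hm0 hm using hch
  replace hm0 := hm0 ∅ rfl
  let ι := {H : Set V // IsFace G H ∧ F ⊆ H ∧ H ≠ G}
  let Q : ι → ι → Set V := fun H K =>
    {v | m K.1 v ≤ m H.1 v ∧ (m K.1 v = m H.1 v ↔ H.1 ⊆ K.1)}
  have hQmem : ∀ (H K : ι) v, v ∈ Q H K ↔
      (m K.1 v ≤ m H.1 v ∧ (m K.1 v = m H.1 v ↔ H.1 ⊆ K.1)) := fun _ _ _ => Iff.rfl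
  let N : ι → Set V := fun H => (vectorSpan ℝ G : Set V) ∩ {v | ∀ K ∈ Finset.univ, v ∈ Q H K}
  have hNmem : ∀ H v, v ∈ N H ↔ v ∈ vectorSpan ℝ G ∧ ∀ K, v ∈ Q H K := by
    intro H v
    simp only [N, Set.mem_inter_iff, SetLike.mem_coe, Set.mem_ofPred_eq, Finset.mem_univ,
      true_implies]
  have hNRO : ∀ H, RO (N H) := by
    intro H
    refine RO_all (Q H) ?_ _ (RO_submodule _)
    intro K C hC
    by_cases h : H.1 ⊆ K.1
    · convert hC.inter_zero (m H.1 - m K.1) using 2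
      ext v
      rw [hQmem, Set.mem_ofPred_eq, LinearMap.sub_apply]
      simp only [h, iff_true]
      constructor
      · rintro ⟨_, h⟩; linarith
      · intro h; constructor <;> linarith
    · convert hC.inter_pos (m H.1 - m K.1) using 2
      ext v
      rw [hQmem, Set.mem_ofPred_eq, LinearMap.sub_apply]
      simp only [h, iff_false]
      constructor
      · rintro ⟨h1, h2⟩; linarith [lt_of_le_of_ne h1 h2]
      · intro h; exact ⟨by linarith, fun h' => by linarith⟩
  have hsep : ∀ (H H' : ι) x y, x ∈ N H → y ∈ N H' →
      (∀ a b : ι, 0 < (m a.1 - m b.1) x ↔ 0 < (m a.1 - m b.1) y) → H = H' := by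
    have aux : ∀ (H H' : ι) x y, x ∈ N H → y ∈ N H' →
      (∀ a b : ι, 0 < (m a.1 - m b.1) x ↔ 0 < (m a.1 - m b.1) y) → H.1 ⊆ H'.1 := by
      intro H H' x y hx hy hs
      have h1 := ((hNmem _ _).1 hx).2 H'
      have h2 := ((hNmem _ _).1 hy).2 H
      rw [hQmem] at h1 h2
      have h3 := hs H H'
      simp only [LinearMap.sub_apply, sub_pos] at h3
      refine h1.2.1 (le_antisymm h1.1 ?_)
      by_contra hc
      push Not at hc
      linarith [h3.1 hc, h2.1]
    intro H H' x y hx hy hs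
    exact Subtype.ext (subset_antisymm (aux H H' x y hx hy hs)
      (aux H' H y x hy hx fun a b => (hs a b).symm))
  have hcov : ∀ v ∈ vectorSpan ℝ G, ∃ H : ι, v ∈ N H ∧
      v ∈ Submodule.span ℝ ((fun x => x - z) '' H.1) := by
    intro v hv
    obtain ⟨H, h1, h2, h3, h4, μ, h5⟩ := face_cover hG hz m hm0 hm hF hFG hv
    refine ⟨⟨H, h1, h2, h3⟩, ?_, h4⟩
    rw [hNmem]
    refine ⟨hv, fun K => ?_⟩
    rw [hQmem]
    have h6 := (h5 H h1 h2 h3).2.2 subset_rfl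
    have h7 := h5 K.1 K.2.1 K.2.2.1 K.2.2.2
    rw [← h6] at h7
    exact h7
  have hNspan : ∀ (H : ι) v, v ∈ N H → v ∈ Submodule.span ℝ ((fun x => x - z) '' H.1) := by
    intro H v hv
    obtain ⟨H', h1, h2⟩ := hcov v ((hNmem _ _).1 hv).1
    rw [hsep H H' v v hv h1 (fun _ _ => Iff.rfl)]
    exact h2
  have hpart := eC_partition ((Finset.univ : Finset (ι × ι)).toList.map fun q => m q.1.1 - m q.2.1)
    (vectorSpan ℝ G : Set V) N (by
      rw [vectorSpan_of_zero (Submodule.zero_mem _), Submodule.span_eq]; exact hfd)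
    (RO_submodule _) hNRO (by
      apply subset_antisymm
      · exact Set.iUnion_subset fun H v hv => ((hNmem _ _).1 hv).1
      · intro v hv
        obtain ⟨H, h, _⟩ := hcov v hv
        exact Set.mem_iUnion.2 ⟨H, h⟩) (by
      intro H H' x y hx hy hs
      refine hsep H H' x y hx hy fun a b => (hs _ ?_).1
      exact List.mem_map.2 ⟨(a, b), by simp, rfl⟩)
  have hL : eC (vectorSpan ℝ G : Set V) = (-1) ^ (pdim G).toNat := by
    rw [eC, if_neg (Set.nonempty_iff_ne_empty.1 ⟨0, Submodule.zero_mem _⟩),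
      vectorSpan_of_zero (Submodule.zero_mem _), Submodule.span_eq, pdim, if_neg hGe,
      direction_affineSpan, Int.toNat_natCast]
  rw [← hL, hpart]
  refine Finset.sum_congr rfl fun H _ => ?_
  by_cases hHe : H.1 = ∅
  · have hN0 : N H = {0} := by
      apply subset_antisymm
      · intro v hv
        have := hNspan H v hv
        rw [hHe] at this
        simpa using this
      · rintro _ rfl
        rw [hNmem]
        refine ⟨Submodule.zero_mem _, fun K => ?_⟩
        rw [hQmem, hHe]
        simp
    rw [hN0, eC, if_neg (Set.singleton_ne_empty _), vectorSpan_singleton, hHe, pdim, if_pos rfl]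
    simp
  · have hHf := H.2.1
    have hmem : ∀ y ∈ rint H.1, ∀ c : ℝ, 0 < c → c • (y - z) ∈ N H := by
      intro y hy c hc
      have hyG := hHf.subset hy.1
      rw [hNmem]
      refine ⟨Submodule.smul_mem _ _ (vsub_mem_vectorSpan ℝ hyG hz.1), fun K => ?_⟩
      rw [hQmem]
      have h1 := (hm H.1 hHf hHe H.2.2.2 y hyG).2.2 hy.1
      simp only [map_smul, smul_eq_mul, h1]
      by_cases hKe : K.1 = ∅
      · rw [hKe, hm0]
        simp only [LinearMap.zero_apply, mul_zero, mul_one]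
        refine ⟨hc.le, fun h => (hc.ne h).elim, fun h => (hHe (Set.subset_empty_iff.1 h)).elim⟩
      · have h2 := hm K.1 K.2.1 hKe K.2.2.2 y hyG
        refine ⟨mul_le_mul_of_nonneg_left h2.1 hc.le, ?_⟩
        rw [mul_right_inj' hc.ne', h2.2]
        exact ⟨fun h => rint_face_subset K.2.1 hHf.subset hy h, fun h => h hy.1⟩
    obtain ⟨y, hy⟩ := rint_nonempty (hG.face hHf) hHe
    have hvs : vectorSpan ℝ (N H) = Submodule.span ℝ ((fun x => x - z) '' H.1) := by
      apply le_antisymm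
      · rw [vectorSpan, Submodule.span_le]
        rintro _ ⟨a, ha, b, hb, rfl⟩
        exact Submodule.sub_mem _ (hNspan H a ha) (hNspan H b hb)
      · have hyv : ∀ y ∈ rint H.1, y - z ∈ vectorSpan ℝ (N H) := by
          intro y hy
          have := vsub_mem_vectorSpan ℝ (hmem y hy 2 two_pos) (hmem y hy 1 one_pos)
          convert this using 1
          rw [vsub_eq_sub]; module
        rw [Submodule.span_le]
        rintro _ ⟨x, hx, rfl⟩
        have h1 := hyv _ (rint_combo (hG.face hHf).convex hx hy (a := 1 / 2) (b := 1 / 2)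
          (by norm_num) (by norm_num) (by norm_num))
        have h2 := Submodule.sub_mem _ (Submodule.smul_mem _ (2 : ℝ) h1) (hyv y hy)
        rw [SetLike.mem_coe]
        convert h2 using 1
        module
    have hNe : N H ≠ ∅ := Set.nonempty_iff_ne_empty.1 ⟨_, hmem y hy 1 one_pos⟩
    rw [eC, if_neg hNe, hvs, finrank_cone hG hz hHf hHe (m H.1) (fun x hx =>
      (hm H.1 hHf hHe H.2.2.2 x (hHf.subset hx)).2.2 hx), pdim, if_neg hHe, direction_affineSpan]
    congr 1

end Euler

section Final

variable {V : Type*} [AddCommGroup V] [Module ℝ V]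

theorem pdim_ge (F : Set V) : -1 ≤ pdim F := by
  unfold pdim; split_ifs <;> omega

theorem pdim_nonneg {F : Set V} (h : F ≠ ∅) : 0 ≤ pdim F := by
  unfold pdim; rw [if_neg h]; omega

theorem pdim_lt {F G : Set V} (hG : IsPolytope G) (h : IsFace G F) (hne : F ≠ G) :
    pdim F < pdim G := by
  have hGe : G ≠ ∅ := by
    rintro rfl
    exact hne (Set.subset_empty_iff.1 h.subset)
  by_cases hFe : F = ∅
  · have := pdim_nonneg hGe
    rw [hFe, pdim, if_pos rfl]; omega
  · have := face_finrank hG h hFe hne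
    rw [pdim, pdim, if_neg hFe, if_neg hGe, direction_affineSpan, direction_affineSpan]
    exact_mod_cast this

theorem relHAux_self (n : ℕ) (F : Set V) : relHAux n F F = 1 := by
  cases n <;> simp [relHAux]

theorem dualHAux_self (n : ℕ) (F : Set V) : dualHAux n F F = 1 := by
  cases n <;> simp [dualHAux]

theorem relHAux_fuel {F : Set V} : ∀ (n N : ℕ) (G : Set V), IsPolytope G → IsFace G F →
    (pdim G + 1).toNat ≤ n → (pdim G + 1).toNat ≤ N → relHAux n F G = relHAux N F G := by
  intro n
  induction n with
  | zero =>
    intro N G hG hF h0 _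
    have : F = G := by
      by_contra hne
      have h1 := pdim_lt hG hF hne
      have h2 := pdim_ge F
      omega
    subst this
    rw [relHAux_self, relHAux_self]
  | succ n ih =>
    intro N G hG hF h0 h1
    by_cases hne : F = G
    · subst hne
      rw [relHAux_self, relHAux_self]
    have h2 := pdim_lt hG hF hne
    have h3 := pdim_ge F
    obtain ⟨N, rfl⟩ : ∃ M, N = M + 1 := ⟨N - 1, by omega⟩
    rw [relHAux, relHAux, if_neg (Ne.symm hne), if_neg (Ne.symm hne)]
    refine finsum_mem_congr rfl fun K hK => ?_
    obtain ⟨hK1, hK2, hK3⟩ := hK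
    have h4 := pdim_lt hG hK1 hK3
    rw [ih N K (hG.face hK1) (hF.of_subset hK1 hK2) (by omega) (by omega)]

theorem dualHAux_fuel {G : Set V} (hG : IsPolytope G) : ∀ (n N : ℕ) (F : Set V), IsFace G F →
    (pdim G - pdim F).toNat ≤ n → (pdim G - pdim F).toNat ≤ N →
      dualHAux n F G = dualHAux N F G := by
  intro n
  induction n with
  | zero =>
    intro N F hF h0 _
    have : F = G := by
      by_contra hne
      have h1 := pdim_lt hG hF hne
      omega
    subst this
    rw [dualHAux_self, dualHAux_self]
  | succ n ih =>
    intro N F hF h0 h1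
    by_cases hne : F = G
    · subst hne
      rw [dualHAux_self, dualHAux_self]
    have h2 := pdim_lt hG hF hne
    obtain ⟨N, rfl⟩ : ∃ M, N = M + 1 := ⟨N - 1, by omega⟩
    rw [dualHAux, dualHAux, if_neg (Ne.symm hne), if_neg (Ne.symm hne)]
    refine finsum_mem_congr rfl fun K hK => ?_
    obtain ⟨hK1, hK2, hK3⟩ := hK
    have h4 := pdim_lt (hG.face hK1) (hF.of_subset hK1 hK2) (Ne.symm hK3)
    rw [ih N K hK1 (by omega) (by omega)]

theorem truncG_one (d : ℤ) (hd : d ≤ 0) : truncG d 1 = 1 := by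
  have : d.toNat = 0 := by omega
  simp [truncG, this]

theorem relG_self (F : Set V) : relG F F = 1 := by
  rw [relG, relH, relHAux_self, truncG_one _ (by omega)]

theorem dualRelG_self (F : Set V) : dualRelG F F = 1 := by
  rw [dualRelG, dualHAux_self, truncG_one _ (by omega)]

theorem relG_rec {F G : Set V} (hG : IsPolytope G) (hF : IsFace G F) (hne : F ≠ G) :
    relG F G = truncG (pdim G - pdim F - 1)
      (∑ᶠ K ∈ {K : Set V | IsFace G K ∧ F ⊆ K ∧ K ≠ G},
        relG F K * (Polynomial.X - 1) ^ (pdim G - pdim K - 1).toNat) := by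
  have h2 := pdim_lt hG hF hne
  have h3 := pdim_ge F
  rw [relG, relH]
  obtain ⟨N, hN⟩ : ∃ M, (pdim G + 1).toNat = M + 1 := ⟨(pdim G + 1).toNat - 1, by omega⟩
  rw [hN, relHAux, if_neg (Ne.symm hne)]
  congr 1
  refine finsum_mem_congr rfl fun K hK => ?_
  obtain ⟨hK1, hK2, hK3⟩ := hK
  have h4 := pdim_lt hG hK1 hK3
  rw [relG, relH, relHAux_fuel N _ K (hG.face hK1) (hF.of_subset hK1 hK2) (by omega) le_rfl]

theorem dualRelG_rec {F G : Set V} (hG : IsPolytope G) (hF : IsFace G F) (hne : F ≠ G) :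
    dualRelG F G = truncG (pdim G - pdim F - 1)
      (∑ᶠ K ∈ {K : Set V | IsFace G K ∧ F ⊆ K ∧ K ≠ F},
        dualRelG K G * (Polynomial.X - 1) ^ (pdim K - pdim F - 1).toNat) := by
  have h2 := pdim_lt hG hF hne
  rw [dualRelG]
  obtain ⟨N, hN⟩ : ∃ M, (pdim G - pdim F + 1).toNat = M + 1 :=
    ⟨(pdim G - pdim F + 1).toNat - 1, by omega⟩
  rw [hN, dualHAux, if_neg (Ne.symm hne)]
  congr 1
  refine finsum_mem_congr rfl fun K hK => ?_
  obtain ⟨hK1, hK2, hK3⟩ := hK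
  have h4 := pdim_lt (hG.face hK1) (hF.of_subset hK1 hK2) (Ne.symm hK3)
  rw [dualRelG, dualHAux_fuel hG N (pdim G - pdim K + 1).toNat K hK1 (by omega) (by omega)]

theorem finsum_faces {P : Set V} [Fintype {F : Set V // IsFace P F}] (A : Set (Set V))
    (hA : ∀ F ∈ A, IsFace P F) (φ : Set V → Polynomial ℚ) (p : {F : Set V // IsFace P F} → Prop)
    [DecidablePred p] (hp : ∀ x, p x ↔ x.1 ∈ A) :
    ∑ᶠ F ∈ A, φ F = ∑ x : {F : Set V // IsFace P F} with p x, φ x.1 := by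
  have hfin : A.Finite := by
    have : {F : Set V | IsFace P F}.Finite := Set.finite_coe_iff.1
      (inferInstanceAs (Finite {F : Set V // IsFace P F}))
    exact this.subset hA
  rw [finsum_mem_eq_finite_toFinset_sum φ hfin]
  symm
  refine Finset.sum_bij (fun x _ => x.1) ?_ ?_ ?_ ?_
  · intro x hx
    rw [hfin.mem_toFinset]
    exact (hp x).1 (Finset.mem_filter.1 hx).2
  · intro x _ y _ h
    exact Subtype.ext h
  · intro F hF
    rw [hfin.mem_toFinset] at hF
    exact ⟨⟨F, hA F hF⟩, Finset.mem_filter.2 ⟨Finset.mem_univ _, (hp _).2 hF⟩, rfl⟩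
  · intro x _; rfl

theorem negone_pow_congr (a b : ℕ) (h : a % 2 = b % 2) : (-1 : Polynomial ℚ) ^ a = (-1) ^ b := by
  rw [← Nat.div_add_mod a 2, ← Nat.div_add_mod b 2, h, pow_add, pow_add, pow_mul, pow_mul]
  simp

theorem eulerC_faces {P : Set V} (hP : IsPolytope P) [Fintype {F : Set V // IsFace P F}] :
    EulerC (fun x : {F : Set V // IsFace P F} => pdim x.1) := by
  intro s t hst
  have hG := hP.face t.2
  have hF : IsFace t.1 s.1 := s.2.of_subset t.2 hst.le
  have hne : s.1 ≠ t.1 := fun h => hst.ne (Subtype.ext h)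
  have hfin : {K | IsFace t.1 K ∧ s.1 ⊆ K ∧ K ≠ t.1}.Finite :=
    hG.finite_faces.subset (fun K hK => hK.1)
  have : Fintype {H : Set V // IsFace t.1 H ∧ s.1 ⊆ H ∧ H ≠ t.1} := hfin.fintype
  have hE := euler_faces hG hF hne
  have hE' : ∑ x : {F : Set V // IsFace P F} with s ≤ x ∧ x < t,
      (-1 : Polynomial ℚ) ^ (pdim x.1 + 1).toNat = (-1) ^ (pdim t.1).toNat := by
    have h1 := congrArg (Int.cast : ℤ → Polynomial ℚ) hE
    push_cast at h1
    rw [← h1]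
    symm
    refine Finset.sum_bij (fun x _ => (⟨x.1, t.2.trans hP x.2.1⟩ : {F : Set V // IsFace P F}))
      ?_ ?_ ?_ ?_
    · intro x _
      exact Finset.mem_filter.2 ⟨Finset.mem_univ _, x.2.2.1,
        lt_of_le_of_ne x.2.1.subset fun h => x.2.2.2 (congrArg Subtype.val h)⟩
    · intro x _ y _ h
      have h' : x.1 = y.1 := congrArg (fun q : {F : Set V // IsFace P F} => q.1) h
      exact Subtype.ext h'
    · intro y hy
      obtain ⟨_, h1, h2⟩ := Finset.mem_filter.1 hy
      exact ⟨⟨y.1, y.2.of_subset t.2 h2.le, h1, fun h => h2.ne (Subtype.ext h)⟩, Finset.mem_univ _,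
        rfl⟩
    · intro x _; rfl
  have hins : (Finset.univ.filter fun x : {F : Set V // IsFace P F} => s ≤ x ∧ x ≤ t) =
      insert t (Finset.univ.filter fun x : {F : Set V // IsFace P F} => s ≤ x ∧ x < t) := by
    ext x
    simp only [Finset.mem_filter, Finset.mem_univ, true_and, Finset.mem_insert]
    constructor
    · rintro ⟨h1, h2⟩
      rcases h2.eq_or_lt with h | h
      · exact Or.inl h
      · exact Or.inr ⟨h1, h⟩
    · rintro (rfl | ⟨h1, h2⟩)
      · exact ⟨hst.le, le_rfl⟩
      · exact ⟨h1, h2.le⟩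
  rw [hins, Finset.sum_insert (by simp)]
  have hterm : ∀ x ∈ (Finset.univ.filter fun x : {F : Set V // IsFace P F} => s ≤ x ∧ x < t),
      (-1 : Polynomial ℚ) ^ (pdim t.1 - pdim x.1).toNat =
        (-1) ^ ((pdim t.1).toNat + 1) * (-1) ^ (pdim x.1 + 1).toNat := by
    intro x hx
    obtain ⟨_, h1, h2⟩ := Finset.mem_filter.1 hx
    have h3 := pdim_lt hG (x.2.of_subset t.2 h2.le) fun h => h2.ne (Subtype.ext h)
    have h4 := pdim_ge x.1
    rw [← pow_add]
    apply negone_pow_congr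
    omega
  rw [Finset.sum_congr rfl hterm, ← Finset.mul_sum, hE', ← pow_add,
    negone_pow_congr ((pdim t.1).toNat + 1 + (pdim t.1).toNat) 1 (by omega)]
  simp

end Final

/-- Stanley's reciprocity identity: for every nonempty polytope `P`,
`∑_{∅ ≤ F ≤ P} (-1)^{dim F} g(F*,t) g(P/F,t) = 0`.  The sign `(-1)^{dim F}` is
written as `(-1)^{(dim F + 1).toNat + 1}`, which has the correct parity for all
faces (including `∅`, of dimension `-1`). -/
theorem stanley_reciprocity {V : Type*} [AddCommGroup V] [Module ℝ V]
    (P : Set V) (hP : IsPolytope P) (hne : P ≠ ∅) :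
    ∑ᶠ F ∈ {F : Set V | IsFace P F},
      (-1 : Polynomial ℚ) ^ ((pdim F + 1).toNat + 1) * (toricGDual F * relG F P) = 0 := by
  have : Fintype {F : Set V // IsFace P F} := hP.finite_faces.fintype
  have hstrict : StrictMono (fun x : {F : Set V // IsFace P F} => pdim x.1) := by
    intro s t hst
    exact pdim_lt (hP.face t.2) (s.2.of_subset t.2 hst.le) fun h => hst.ne (Subtype.ext h)
  let s : {F : Set V // IsFace P F} := ⟨∅, Or.inr (Or.inl rfl)⟩
  let t : {F : Set V // IsFace P F} := ⟨P, Or.inl rfl⟩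
  have hst : s < t := lt_of_le_of_ne (Set.empty_subset P) fun h => hne (congrArg Subtype.val h).symm
  have hmain := recip (fun x : {F : Set V // IsFace P F} => pdim x.1) hstrict (eulerC_faces hP)
    (fun s t => relG s.1 t.1) (fun s t => dualRelG s.1 t.1) (fun s => relG_self s.1) (by
      intro s t hst
      rw [relG_rec (hP.face t.2) (s.2.of_subset t.2 hst.le) fun h => hst.ne (Subtype.ext h)]
      congr 1
      refine finsum_faces {K : Set V | IsFace t.1 K ∧ s.1 ⊆ K ∧ K ≠ t.1} (fun F hF => t.2.trans hP hF.1)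
        (fun K => relG s.1 K * (Polynomial.X - 1) ^ (pdim t.1 - pdim K - 1).toNat) _ ?_
      intro x
      constructor
      · rintro ⟨h1, h2⟩
        exact ⟨x.2.of_subset t.2 h2.le, h1, fun h => h2.ne (Subtype.ext h)⟩
      · rintro ⟨h1, h2, h3⟩
        exact ⟨h2, lt_of_le_of_ne h1.subset fun h => h3 (congrArg Subtype.val h)⟩)
    (fun s => dualRelG_self s.1) (by
      intro s t hst
      rw [dualRelG_rec (hP.face t.2) (s.2.of_subset t.2 hst.le) fun h => hst.ne (Subtype.ext h)]
      congr 1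
      refine finsum_faces {K : Set V | IsFace t.1 K ∧ s.1 ⊆ K ∧ K ≠ s.1} (fun F hF => t.2.trans hP hF.1)
        (fun K => dualRelG K t.1 * (Polynomial.X - 1) ^ (pdim K - pdim s.1 - 1).toNat) _ ?_
      intro x
      constructor
      · rintro ⟨h1, h2⟩
        exact ⟨x.2.of_subset t.2 h2, h1.le, fun h => h1.ne (Subtype.ext h).symm⟩
      · rintro ⟨h1, h2, h3⟩
        exact ⟨lt_of_le_of_ne h2 fun h => h3 (congrArg Subtype.val h).symm, h1.subset⟩)
    s t hst
  rw [finsum_faces {F : Set V | IsFace P F} (fun F hF => hF) _ (fun x => s ≤ x ∧ x ≤ t) (by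
    intro x
    exact ⟨fun _ => x.2, fun _ => ⟨Set.empty_subset x.1, x.2.subset⟩⟩)]
  rw [← mul_zero ((-1 : Polynomial ℚ) ^ (pdim P).toNat), ← hmain, Finset.mul_sum]
  refine Finset.sum_congr rfl fun x _ => ?_
  have h1 : pdim x.1 ≤ pdim P := hstrict.monotone (show x ≤ t from x.2.subset)
  have h2 := pdim_ge x.1
  have h3 := pdim_nonneg hne
  have h4 : (-1 : Polynomial ℚ) ^ ((pdim x.1 + 1).toNat + 1) =
      (-1) ^ (pdim P).toNat * (-1) ^ (pdim P - pdim x.1).toNat := by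
    rw [← pow_add]
    apply negone_pow_congr
    omega
  rw [h4]
  show _ * (dualRelG ∅ x.1 * relG x.1 P) =
    _ * (dualRelG ∅ x.1 * ((-1) ^ (pdim P - pdim x.1).toNat * relG x.1 P))
  ring
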